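/- Let p and q be positive integers. If τ ∈ S_ann-nc(p,q), then τ⁻¹γ ∈ S_ann-nc(p,q). (Consequently the annular Kreweras complementation map K(τ) = τ⁻¹γ is a well-defined bijection from S_ann-nc(p,q) to itself.) -/

import Mathlib

/-- The permutation induced by `f` on the subset `B`: an element `b` is sent to the first
element of the sequence `f b, f (f b), f (f (f b)), ...` that lies in `B`
(and is left fixed if no iterate ever returns to `B`). -/
noncomputable def induced {α : Type*} (f : α → α) (B : Set α) (b : α) : α := by
  classical
  exact if h : ∃ k, 0 < k ∧ f^[k] b ∈ B then f^[Nat.find h] b else b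

/-- `A` is an orbit of the permutation `τ`. -/
def IsOrbit {α : Type*} (τ : Equiv.Perm α) (A : Set α) : Prop :=
  ∃ a, A = {b | τ.SameCycle a b}

/-- The number of orbits of `τ` (fixed points count as orbits). -/
noncomputable def numOrbits {α : Type*} (τ : Equiv.Perm α) : ℕ :=
  Set.ncard {A : Set α | IsOrbit τ A}

/-- `induced f S` acts on `a, b, c` as the 3-cycle `(a, b, c)`. -/
def MapsCyc3 {α : Type*} (f : α → α) (S : Set α) (a b c : α) : Prop :=
  induced f S a = b ∧ induced f S b = c ∧ induced f S c = a

/-- `induced f S` acts on `a, b, c, d` as the 4-cycle `(a, b, c, d)`. -/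
def MapsCyc4 {α : Type*} (f : α → α) (S : Set α) (a b c d : α) : Prop :=
  induced f S a = b ∧ induced f S b = c ∧ induced f S c = d ∧ induced f S d = a

/-- `induced f S` acts on `a, b, c, d` as the product of transpositions `(a, c)(b, d)`. -/
def MapsSwap2 {α : Type*} (f : α → α) (S : Set α) (a b c d : α) : Prop :=
  induced f S a = c ∧ induced f S c = a ∧ induced f S b = d ∧ induced f S d = b

/-- `induced f S` acts on `x, y` as the transposition `(x, y)`. -/
def MapsSwap {α : Type*} (f : α → α) (S : Set α) (x y : α) : Prop :=
  induced f S x = y ∧ induced f S y = x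

/-- `σ` is standard with respect to the "forward cycle" `γ₀`, i.e. `σ∣B = γ₀∣B` for
every orbit `B` of `σ`. -/
def DiscStandardRel {n : ℕ} (γ₀ σ : Equiv.Perm (Fin n)) : Prop :=
  ∀ A : Set (Fin n), IsOrbit σ A → ∀ b ∈ A, induced (⇑σ) A b = induced (⇑γ₀) A b

/-- The orbit partition of `σ` has no crossing: there are no `a < b < c < d` with
`a, c` in one orbit and `b, d` in a different orbit. -/
def OrbitsNoCrossing {n : ℕ} (σ : Equiv.Perm (Fin n)) : Prop :=
  ¬ ∃ a b c d : Fin n, a < b ∧ b < c ∧ c < d ∧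
      σ.SameCycle a c ∧ σ.SameCycle b d ∧ ¬ σ.SameCycle a b

/-- Disc non-crossing relative to a given forward cycle `γ₀`. -/
def DiscNCRel {n : ℕ} (γ₀ σ : Equiv.Perm (Fin n)) : Prop :=
  DiscStandardRel γ₀ σ ∧ OrbitsNoCrossing σ

/-- The set `S_disc-nc(n)` of disc non-crossing permutations of `[n]`
(here `[n] = {1, …, n}` is modelled by `Fin n`, and the forward cycle
`γ₀ = (1, 2, …, n)` is `finRotate n`). -/
def DiscNC {n : ℕ} (σ : Equiv.Perm (Fin n)) : Prop :=
  DiscNCRel (finRotate n) σ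

/-- The external points `{1, …, p}` (0-indexed: values `< p`). -/
def extSet (p q : ℕ) : Set (Fin (p + q)) := {i | (i : ℕ) < p}

/-- The internal points `{p+1, …, p+q}` (0-indexed: values `≥ p`). -/
def intSet (p q : ℕ) : Set (Fin (p + q)) := {i | p ≤ (i : ℕ)}

/-- `γ_ext = (1, 2, …, p)`, the forward cycle on the external points. -/
def gammaExt (p q : ℕ) : Equiv.Perm (Fin (p + q)) :=
  ((List.finRange (p + q)).take p).formPerm

/-- `γ_int = (p+1, p+2, …, p+q)`, the forward cycle on the internal points. -/
def gammaInt (p q : ℕ) : Equiv.Perm (Fin (p + q)) :=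
  ((List.finRange (p + q)).drop p).formPerm

/-- `γ = γ_ext · γ_int`. -/
def gammaAnn (p q : ℕ) : Equiv.Perm (Fin (p + q)) := gammaExt p q * gammaInt p q

/-- `λ_{x,y}`: the permutation fixing `x` and `y` and cycling the remaining points as
`(γ_ext(x), γ_ext²(x), …, γ_ext^{p-1}(x), γ_int(y), γ_int²(y), …, γ_int^{q-1}(y))`. -/
def lamPerm (p q : ℕ) (x y : Fin (p + q)) : Equiv.Perm (Fin (p + q)) :=
  (((List.range (p - 1)).map fun k => (gammaExt p q ^ (k + 1)) x) ++
    ((List.range (q - 1)).map fun k => (gammaInt p q ^ (k + 1)) y)).formPerm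

/-- `τ` is standard in `(p,q)`-annular sense. -/
def AnnStandard (p q : ℕ) (τ : Equiv.Perm (Fin (p + q))) : Prop :=
  (∀ A : Set (Fin (p + q)), IsOrbit τ A →
    (∀ b ∈ A ∩ extSet p q,
        induced (⇑τ) (A ∩ extSet p q) b = induced (⇑(gammaExt p q)) (A ∩ extSet p q) b) ∧
    (∀ b ∈ A ∩ intSet p q,
        induced (⇑τ) (A ∩ intSet p q) b = induced (⇑(gammaInt p q)) (A ∩ intSet p q) b)) ∧
  (∀ A : Set (Fin (p + q)), IsOrbit τ A →
    (A ∩ extSet p q).Nonempty → (A ∩ intSet p q).Nonempty →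
    (∃! a, a ∈ A ∩ extSet p q ∧ τ a ∈ intSet p q) ∧
    (∃! a, a ∈ A ∩ intSet p q ∧ τ a ∈ extSet p q))

/-- The annular crossing pattern (AC-1). -/
def AC1 (p q : ℕ) (τ : Equiv.Perm (Fin (p + q))) : Prop :=
  ∃ a b c d : Fin (p + q), List.Pairwise (· ≠ ·) [a, b, c, d] ∧
    MapsCyc4 (⇑(gammaAnn p q)) {a, b, c, d} a b c d ∧
    MapsSwap2 (⇑τ) {a, b, c, d} a b c d

/-- The annular crossing pattern (AC-2). -/
def AC2 (p q : ℕ) (τ : Equiv.Perm (Fin (p + q))) : Prop :=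
  ∃ a b c x y : Fin (p + q), List.Pairwise (· ≠ ·) [a, b, c, x, y] ∧
    x ∈ extSet p q ∧ y ∈ intSet p q ∧
    MapsCyc3 (⇑(lamPerm p q x y)) {a, b, c} a b c ∧
    MapsCyc3 (⇑τ) {a, b, c, x, y} a c b ∧
    MapsSwap (⇑τ) {a, b, c, x, y} x y

/-- The annular crossing pattern (AC-3). -/
def AC3 (p q : ℕ) (τ : Equiv.Perm (Fin (p + q))) : Prop :=
  ∃ a b c d x y : Fin (p + q), List.Pairwise (· ≠ ·) [a, b, c, d, x, y] ∧
    x ∈ extSet p q ∧ y ∈ intSet p q ∧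
    MapsCyc4 (⇑(lamPerm p q x y)) {a, b, c, d} a b c d ∧
    MapsSwap2 (⇑τ) {a, b, c, d, x, y} a b c d ∧
    MapsSwap (⇑τ) {a, b, c, d, x, y} x y

/-- The set `S_ann-nc(p,q)` of `(p,q)`-annular non-crossing permutations. -/
def AnnNC (p q : ℕ) (τ : Equiv.Perm (Fin (p + q))) : Prop :=
  AnnStandard p q τ ∧ ¬ AC1 p q τ ∧ ¬ AC2 p q τ ∧ ¬ AC3 p q τ

/-- A `(p,q)`-connecting set: meets both the external and internal points. -/
def ConnectingBlock (p q : ℕ) (B : Set (Fin (p + q))) : Prop :=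
  (B ∩ extSet p q).Nonempty ∧ (B ∩ intSet p q).Nonempty

/-- `τ` is `(p,q)`-connected: it has a `(p,q)`-connecting orbit. -/
def AnnConnected (p q : ℕ) (τ : Equiv.Perm (Fin (p + q))) : Prop :=
  ∃ A : Set (Fin (p + q)), IsOrbit τ A ∧ ConnectingBlock p q A

/-- A family of blocks has no crossing: no `a < b < c < d` with `a, c` in one block and
`b, d` in a different block. -/
def NoCrossing {n : ℕ} (ρ : Set (Set (Fin n))) : Prop :=
  ¬ ∃ (a b c d : Fin n) (B C : Set (Fin n)), B ∈ ρ ∧ C ∈ ρ ∧ B ≠ C ∧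
      a < b ∧ b < c ∧ c < d ∧ a ∈ B ∧ c ∈ B ∧ b ∈ C ∧ d ∈ C

/-!
Cutting the annulus open from just after an external point `u` to just after an internal point `v`
turns it into a disc with boundary permutation `γ * swap u v`. A permutation `τ` is annular
noncrossing exactly when it is disc noncrossing for some such cut: if `τ` sends an external point
`u` to an internal one, cut from `u` to the `v` with `γ v = τ u`; otherwise cut anywhere. By Biane's
theorem, `τ` is disc noncrossing if and only if it lies on a geodesic from `1` to the boundary
permutation, for the word length in transpositions.

For this last condition the Kreweras complement is a matter of counting orbits: the complement of
`τ⁻¹ * γ` in `γ` is conjugate to `τ`, and multiplying by a transposition changes the number of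
orbits by one.
-/

section NumOrbits

open Equiv

variable {α : Type*}

/-- The functions that are constant on the orbits of `π`. -/
def invariantFunctions (π : Perm α) : Submodule ℚ (α → ℚ) where
  carrier := {f | ∀ z, f (π z) = f z}
  add_mem' hf hg z := by rw [Pi.add_apply, Pi.add_apply, hf z, hg z]
  zero_mem' _ := rfl
  smul_mem' c f hf z := by rw [Pi.smul_apply, Pi.smul_apply, hf z]

theorem mem_invariantFunctions {π : Perm α} {f : α → ℚ} :
    f ∈ invariantFunctions π ↔ ∀ z, f (π z) = f z := Iff.rfl

theorem apply_eq_of_sameCycle_of_mem_invariantFunctions {π : Perm α} {f : α → ℚ}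
    (hf : f ∈ invariantFunctions π) {z w : α} (h : π.SameCycle z w) : f w = f z := by
  obtain ⟨n, rfl⟩ := h
  induction n with
  | zero => rfl
  | succ n ih => rw [add_comm, zpow_add, zpow_one, Perm.mul_apply, hf, ih]
  | pred n ih => rw [← ih, ← hf, ← Perm.mul_apply, ← zpow_one_add, add_sub_cancel]

theorem numOrbits_eq_card_quotient (π : Perm α) :
    numOrbits π = Nat.card (Quotient (Perm.SameCycle.setoid π)) := by
  have h : {A | IsOrbit π A} = (Perm.SameCycle.setoid π).classes := by
    ext A
    refine exists_congr fun a => ?_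
    simp only [Perm.sameCycle_comm (x := a)]
    rfl
  rw [Nat.card_congr (Setoid.quotientEquivClasses _), numOrbits, h, Nat.card_coe_set_eq]

-- Computing the number of orbits as a dimension reduces the effect of multiplying by a
-- transposition to linear algebra.
theorem finrank_invariantFunctions [Finite α] (π : Perm α) :
    Module.finrank ℚ (invariantFunctions π) = numOrbits π := by
  classical
  have := Fintype.ofFinite (Quotient (Perm.SameCycle.setoid π))
  let pullback : (Quotient (Perm.SameCycle.setoid π) → ℚ) →ₗ[ℚ] α → ℚ :=
    LinearMap.funLeft ℚ ℚ (Quotient.mk _)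
  have hrange : pullback.range = invariantFunctions π := by
    ext f
    refine ⟨?_, fun hf => ?_⟩
    · rintro ⟨g, rfl⟩ z
      exact congrArg g (Quotient.sound (Perm.SameCycle.refl π z).apply_left)
    · exact ⟨Quotient.lift f fun _ _ h =>
        (apply_eq_of_sameCycle_of_mem_invariantFunctions hf h).symm, rfl⟩
  rw [← hrange, LinearMap.finrank_range_of_inj
    (LinearMap.funLeft_injective_of_surjective ℚ ℚ _ Quotient.mk_surjective),
    Module.finrank_pi, numOrbits_eq_card_quotient, Nat.card_eq_fintype_card]

theorem numOrbits_inv (π : Perm α) : numOrbits π⁻¹ = numOrbits π := by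
  simp only [numOrbits, IsOrbit, Perm.sameCycle_inv]

theorem numOrbits_one [Fintype α] : numOrbits (1 : Perm α) = Fintype.card α := by
  have h : invariantFunctions (1 : Perm α) = ⊤ := eq_top_iff.2 fun _ _ _ => rfl
  rw [← finrank_invariantFunctions, h, finrank_top, Module.finrank_pi]

theorem eq_one_of_card_le_numOrbits [Fintype α] {π : Perm α}
    (h : Fintype.card α ≤ numOrbits π) : π = 1 := by
  classical
  rw [← finrank_invariantFunctions] at h
  have htop : invariantFunctions π = ⊤ :=
    Submodule.eq_top_of_finrank_eq
      (le_antisymm (Submodule.finrank_le _) (by rwa [Module.finrank_pi]))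
  ext z
  have hz : (Pi.single z 1 : α → ℚ) ∈ invariantFunctions π := htop ▸ Submodule.mem_top
  by_contra hne
  simpa [show π z ≠ z from hne] using hz z

section Finite

variable [Finite α]

theorem numOrbits_le_numOrbits_conj (π g : Perm α) :
    numOrbits π ≤ numOrbits (g⁻¹ * π * g) := by
  rw [← finrank_invariantFunctions, ← finrank_invariantFunctions,
    ← LinearEquiv.finrank_map_eq (LinearEquiv.funCongrLeft ℚ ℚ g)]
  refine Submodule.finrank_mono ?_
  rintro _ ⟨f, hf, rfl⟩ z
  simpa [LinearEquiv.funCongrLeft] using hf (g z)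

theorem numOrbits_conj (π g : Perm α) : numOrbits (g⁻¹ * π * g) = numOrbits π := by
  refine le_antisymm ?_ (numOrbits_le_numOrbits_conj π g)
  simpa [mul_assoc] using numOrbits_le_numOrbits_conj (g⁻¹ * π * g) g⁻¹

variable [DecidableEq α]

-- The functions invariant under `π * swap a b` include those of `π` that agree at `a` and `b`,
-- a subspace of codimension at most one.
theorem numOrbits_le_mul_swap (π : Perm α) (a b : α) :
    numOrbits π ≤ numOrbits (π * swap a b) + 1 := by
  let diff : invariantFunctions π →ₗ[ℚ] ℚ :=
    ((LinearMap.proj a : (α → ℚ) →ₗ[ℚ] ℚ) - LinearMap.proj b).domRestrict _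
  have hrange : Module.finrank ℚ diff.range ≤ 1 := by
    simpa using Submodule.finrank_le diff.range
  have hker : Module.finrank ℚ diff.ker ≤ numOrbits (π * swap a b) := by
    rw [← finrank_invariantFunctions, ← Submodule.finrank_map_subtype_eq]
    refine Submodule.finrank_mono ?_
    rintro _ ⟨⟨f, hf⟩, hab, rfl⟩ z
    have hab : f a = f b := sub_eq_zero.1 hab
    rw [Submodule.subtype_apply, Perm.mul_apply]
    simp only [mem_invariantFunctions.1 hf, swap_apply_def]
    split_ifs with h h <;> simp only [h, hab]
  have := LinearMap.finrank_range_add_finrank_ker diff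
  rw [← finrank_invariantFunctions π]
  omega

theorem numOrbits_mul_swap_le (π : Perm α) (a b : α) :
    numOrbits (π * swap a b) ≤ numOrbits π + 1 := by
  simpa [mul_assoc] using numOrbits_le_mul_swap (π * swap a b) a b

theorem numOrbits_le_swap_mul (π : Perm α) (a b : α) :
    numOrbits π ≤ numOrbits (swap a b * π) + 1 := by
  have h := numOrbits_le_mul_swap π⁻¹ a b
  rw [numOrbits_inv, ← numOrbits_inv (π⁻¹ * _)] at h
  simpa using h

theorem numOrbits_swap_mul_le (π : Perm α) (a b : α) :
    numOrbits (swap a b * π) ≤ numOrbits π + 1 := by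
  simpa [← mul_assoc] using numOrbits_le_swap_mul (swap a b * π) a b

end Finite

section DeletePoint

variable [DecidableEq α]

/-- The permutation `π` with `x` cut out of its cycle: `x` becomes a fixed point and its
predecessor is sent to its successor. -/
def deletePoint (π : Perm α) (x : α) : Perm α := swap x (π x) * π

theorem deletePoint_apply_self (π : Perm α) (x : α) : deletePoint π x x = x := by
  rw [deletePoint, Perm.mul_apply, swap_apply_right]

theorem deletePoint_apply_of_ne (π : Perm α) {x z : α} (hπz : π z ≠ x) (hz : z ≠ x) :
    deletePoint π x z = π z :=
  swap_apply_of_ne_of_ne hπz (π.injective.ne hz)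

theorem deletePoint_apply_of_apply_eq (π : Perm α) {x z : α} (h : π z = x) :
    deletePoint π x z = π x := by
  rw [deletePoint, Perm.mul_apply, h, swap_apply_left]

theorem deletePoint_of_fixed (π : Perm α) {x : α} (h : π x = x) : deletePoint π x = π := by
  rw [deletePoint, h, swap_self, ← Perm.one_def, one_mul]

theorem deletePoint_apply_eq_self_iff (π : Perm α) {x z : α} :
    deletePoint π x z = x ↔ z = x :=
  ⟨fun h => (deletePoint π x).injective (h.trans (deletePoint_apply_self π x).symm),
    fun h => h ▸ deletePoint_apply_self π z⟩

variable [Finite α]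

theorem numOrbits_lt_deletePoint (π : Perm α) {x : α} (h : π x ≠ x) :
    numOrbits π < numOrbits (deletePoint π x) := by
  rw [← finrank_invariantFunctions, ← finrank_invariantFunctions]
  refine Submodule.finrank_lt_finrank_of_lt (SetLike.lt_iff_le_and_exists.2 ⟨?_, ?_⟩)
  · intro f hf z
    rw [deletePoint, Perm.mul_apply, swap_apply_def]
    split_ifs with h1 h2
    · rw [hf, ← hf z, h1]
    · rw [← hf z, h2, hf]
    · exact hf z
  · refine ⟨Pi.single x 1, fun z => ?_, fun hx => ?_⟩
    · simp only [Pi.single_apply, deletePoint_apply_eq_self_iff]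
    · simpa [h] using hx x

theorem numOrbits_lt_mul_swap_apply (π : Perm α) {u : α} (h : π u ≠ u) :
    numOrbits π < numOrbits (π * swap u (π u)) := by
  have := numOrbits_lt_deletePoint π (π.injective.ne h)
  rwa [deletePoint, ← mul_swap_eq_swap_mul] at this

end DeletePoint

section Merge

variable [DecidableEq α] {π : Perm α} {S : Finset α} {u v : α}

theorem eq_of_mem_invariantFunctions_mul_swap (hS : ∀ z, π z ∈ S ↔ z ∈ S) (hu : u ∈ S)
    (hv : v ∉ S) {f : α → ℚ} (hf : f ∈ invariantFunctions (π * swap u v)) : f u = f v := by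
  have hfπ : ∀ z, f (π z) = f (swap u v z) := fun z => by simpa using hf (swap u v z)
  have hsum : ∑ z ∈ S, f (swap u v z) = ∑ z ∈ S, f z := by
    simp only [← hfπ]
    exact Finset.sum_equiv π (fun z => (hS z).symm) fun _ _ => rfl
  have hrest : ∑ z ∈ S.erase u, f (swap u v z) = ∑ z ∈ S.erase u, f z := by
    refine Finset.sum_congr rfl fun z hz => ?_
    rw [swap_apply_of_ne_of_ne (Finset.ne_of_mem_erase hz)]
    exact ne_of_mem_of_not_mem (Finset.mem_of_mem_erase hz) hv
  rw [← Finset.add_sum_erase S _ hu, ← Finset.add_sum_erase S f hu, hrest, swap_apply_left] at hsum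
  exact (add_right_cancel hsum).symm

theorem numOrbits_mul_swap_lt [Finite α] (hS : ∀ z, π z ∈ S ↔ z ∈ S) (hu : u ∈ S)
    (hv : v ∉ S) : numOrbits (π * swap u v) < numOrbits π := by
  rw [← finrank_invariantFunctions, ← finrank_invariantFunctions]
  refine Submodule.finrank_lt_finrank_of_lt (SetLike.lt_iff_le_and_exists.2 ⟨?_, ?_⟩)
  · intro f hf z
    have huv := eq_of_mem_invariantFunctions_mul_swap hS hu hv hf
    have hz : f (π z) = f (swap u v z) := by simpa using hf (swap u v z)
    rw [hz, swap_apply_def]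
    split_ifs with h h <;> simp only [h, huv]
  · refine ⟨fun z => if z ∈ S then 1 else 0, fun z => by simp only [hS], fun hf => ?_⟩
    simpa [hu, hv] using eq_of_mem_invariantFunctions_mul_swap hS hu hv hf

end Merge

end NumOrbits

section Geodesic

open Equiv

variable {α : Type*}

/-- `τ` lies on a geodesic from `1` to `γ` for the word length in transpositions. As the length
of `π` is `Fintype.card α - numOrbits π`, this is equality in the triangle inequality
`|γ| ≤ |τ| + |τ⁻¹γ|`; only the inequality that can fail is recorded. -/
def IsGeodesic [Fintype α] (τ γ : Perm α) : Prop :=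
  Fintype.card α + numOrbits γ ≤ numOrbits τ + numOrbits (τ⁻¹ * γ)

theorem isGeodesic_one [Fintype α] : IsGeodesic (1 : Perm α) 1 := by
  rw [IsGeodesic, inv_one, mul_one, numOrbits_one]

-- Here `τ⁻¹γ = γ⁻¹` has as many orbits as `γ`, which forces `τ` to have length zero.
theorem IsGeodesic.eq_one_of_sq [Fintype α] {γ : Perm α} (h : IsGeodesic (γ ^ 2) γ) :
    γ ^ 2 = 1 := by
  refine eq_one_of_card_le_numOrbits ?_
  rw [IsGeodesic, show (γ ^ 2)⁻¹ * γ = γ⁻¹ by group, numOrbits_inv] at h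
  omega

section Complement

variable [DecidableEq α] {τ γ : Perm α} {x : α}

theorem inv_mul_deletePoint (τ γ : Perm α) (x : α) :
    τ⁻¹ * deletePoint γ x = swap (τ⁻¹ x) (τ⁻¹ (γ x)) * (τ⁻¹ * γ) := by
  rw [deletePoint, ← mul_assoc, mul_swap_eq_swap_mul, mul_assoc]

theorem complement_deletePoint_of_fixed (h : τ x = x) :
    (deletePoint τ x)⁻¹ * deletePoint γ x = deletePoint (τ⁻¹ * γ) x := by
  rw [deletePoint_of_fixed τ h, inv_mul_deletePoint, Perm.inv_eq_iff_eq.2 h.symm]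
  rfl

theorem complement_deletePoint_of_fixed_right (h : γ x = x) :
    (deletePoint τ x)⁻¹ * deletePoint γ x = swap (τ⁻¹ x) x * (τ⁻¹ * γ) := by
  rw [deletePoint_of_fixed γ h, deletePoint, mul_inv_rev, swap_inv, mul_swap_eq_swap_mul,
    Perm.inv_eq_iff_eq.2 rfl, mul_assoc]

theorem complement_deletePoint_of_apply_eq (h : τ x = γ x) :
    (deletePoint τ x)⁻¹ * deletePoint γ x = τ⁻¹ * γ := by
  simp [deletePoint, h, mul_assoc]

theorem swap_mul_swap_of_ne {w x r : α} (hwx : w ≠ x) (hrw : r ≠ w) (hrx : r ≠ x) :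
    swap w x * swap w r = swap w r * swap x r := by
  ext z
  simp only [Perm.mul_apply, swap_apply_def]
  grind

theorem complement_deletePoint_of_ne (hτ : τ x ≠ x) (hγ : γ x ≠ x) (hne : τ x ≠ γ x) :
    (deletePoint τ x)⁻¹ * deletePoint γ x =
      swap (τ⁻¹ x) (τ⁻¹ (γ x)) * deletePoint (τ⁻¹ * γ) x := by
  have hpred : τ⁻¹ x ≠ x := by rwa [Ne, Perm.inv_eq_iff_eq, eq_comm]
  have hcompl : τ⁻¹ (γ x) ≠ x := by rwa [Ne, Perm.inv_eq_iff_eq, eq_comm]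
  calc (deletePoint τ x)⁻¹ * deletePoint γ x
      = τ⁻¹ * swap x (τ x) * deletePoint γ x := by rw [deletePoint, mul_inv_rev, swap_inv]
    _ = swap (τ⁻¹ x) x * (τ⁻¹ * deletePoint γ x) := by
        rw [mul_swap_eq_swap_mul, Perm.inv_eq_iff_eq.2 rfl, mul_assoc]
    _ = swap (τ⁻¹ x) x * swap (τ⁻¹ x) (τ⁻¹ (γ x)) * (τ⁻¹ * γ) := by
        rw [inv_mul_deletePoint, mul_assoc]
    _ = swap (τ⁻¹ x) (τ⁻¹ (γ x)) * deletePoint (τ⁻¹ * γ) x := by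
        rw [swap_mul_swap_of_ne hpred (τ⁻¹.injective.ne hγ) hcompl, mul_assoc]
        rfl

end Complement

variable [Fintype α] [DecidableEq α] {τ γ : Perm α}

theorem IsGeodesic.map_deletePoint (h : IsGeodesic τ γ) (x : α) :
    IsGeodesic (deletePoint τ x) (deletePoint γ x) := by
  have hγle : numOrbits (deletePoint γ x) ≤ numOrbits γ + 1 :=
    numOrbits_swap_mul_le _ _ _
  unfold IsGeodesic at *
  by_cases hγ : γ x = x <;> by_cases hτ : τ x = x
  · rwa [deletePoint_of_fixed τ hτ, deletePoint_of_fixed γ hγ]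
  · have hτlt := numOrbits_lt_deletePoint τ hτ
    have hle := numOrbits_le_swap_mul (τ⁻¹ * γ) (τ⁻¹ x) x
    rw [complement_deletePoint_of_fixed_right hγ, deletePoint_of_fixed γ hγ]
    omega
  · have hlt : numOrbits (τ⁻¹ * γ) < numOrbits (deletePoint (τ⁻¹ * γ) x) :=
      numOrbits_lt_deletePoint _ (by rwa [Perm.mul_apply, Ne, Perm.inv_eq_iff_eq, hτ])
    rw [complement_deletePoint_of_fixed hτ, deletePoint_of_fixed τ hτ]
    omega
  · have hτlt := numOrbits_lt_deletePoint τ hτ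
    by_cases hne : τ x = γ x
    · rw [complement_deletePoint_of_apply_eq hne]
      omega
    · have hlt : numOrbits (τ⁻¹ * γ) < numOrbits (deletePoint (τ⁻¹ * γ) x) :=
        numOrbits_lt_deletePoint _
          (by rwa [Perm.mul_apply, Ne, Perm.inv_eq_iff_eq, eq_comm])
      have hle := numOrbits_le_swap_mul (deletePoint (τ⁻¹ * γ) x) (τ⁻¹ x) (τ⁻¹ (γ x))
      rw [complement_deletePoint_of_ne hτ hγ hne]
      omega

theorem IsGeodesic.of_deletePoint_of_apply_eq {x : α} (hx : τ x = γ x) (hγ : γ x ≠ x)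
    (h : IsGeodesic (deletePoint τ x) (deletePoint γ x)) : IsGeodesic τ γ := by
  rw [IsGeodesic, complement_deletePoint_of_apply_eq hx] at h
  have hγlt := numOrbits_lt_deletePoint γ hγ
  have hτle : numOrbits (deletePoint τ x) ≤ numOrbits τ + 1 :=
    numOrbits_swap_mul_le _ _ _
  unfold IsGeodesic
  omega

theorem IsGeodesic.of_deletePoint_of_fixed {x : α} (hx : τ x = x)
    (h : IsGeodesic (deletePoint τ x) (deletePoint γ x)) : IsGeodesic τ γ := by
  by_cases hγ : γ x = x
  · rwa [deletePoint_of_fixed τ hx, deletePoint_of_fixed γ hγ] at h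
  rw [IsGeodesic, complement_deletePoint_of_fixed hx, deletePoint_of_fixed τ hx] at h
  have hγlt := numOrbits_lt_deletePoint γ hγ
  have hle : numOrbits (deletePoint (τ⁻¹ * γ) x) ≤ numOrbits (τ⁻¹ * γ) + 1 :=
    numOrbits_swap_mul_le _ _ _
  unfold IsGeodesic
  omega

section Kreweras

variable {S : Finset α} {u v : α}

-- In both cases below the complement of `τ⁻¹γ` in `γ` is `γ⁻¹τγ`, a conjugate of `τ`.
theorem isGeodesic_complement_of_mem_of_notMem (hS : ∀ z, γ z ∈ S ↔ z ∈ S)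
    (h : IsGeodesic τ (γ * swap u v)) {a : α} (ha : γ a ∈ S) (hτa : τ (γ a) ∉ S) :
    IsGeodesic (τ⁻¹ * γ) (γ * swap a (γ⁻¹ (τ (γ a)))) := by
  set b := γ⁻¹ (τ (γ a)) with hb
  have haS : a ∈ S := (hS a).1 ha
  have hbS : b ∉ S := by rwa [← hS, hb, Perm.inv_def, apply_symm_apply]
  have hconj : (γ⁻¹ * τ * γ) a = b := rfl
  have hsplit := numOrbits_lt_mul_swap_apply (γ⁻¹ * τ * γ) (u := a)
    (hconj ▸ (ne_of_mem_of_not_mem haS hbS).symm)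
  rw [hconj, numOrbits_conj] at hsplit
  have hmerge := numOrbits_mul_swap_lt hS haS hbS
  have hγ := numOrbits_le_mul_swap γ u v
  have hτγ := numOrbits_mul_swap_le (τ⁻¹ * γ) u v
  rw [IsGeodesic, ← mul_assoc] at h
  rw [IsGeodesic, show (τ⁻¹ * γ)⁻¹ * (γ * swap a b) = γ⁻¹ * τ * γ * swap a b by group]
  omega

theorem isGeodesic_complement_of_mapsTo (hS : ∀ z, γ z ∈ S ↔ z ∈ S) (hu : u ∈ S) (hv : v ∉ S)
    (h : IsGeodesic τ (γ * swap u v)) (hτ : ∀ z ∈ S, τ z ∈ S) :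
    IsGeodesic (τ⁻¹ * γ) (γ * swap u v) := by
  have hτS : ∀ z, τ z ∈ S ↔ z ∈ S := fun z => by
    have himage : S.image τ = S :=
      Finset.eq_of_subset_of_card_le (Finset.image_subset_iff.2 hτ)
        (Finset.card_image_of_injective S τ.injective).ge
    simpa only [himage] using τ.injective.mem_finset_image (s := S) (a := z)
  have hτγ : numOrbits (τ⁻¹ * γ * swap u v) < numOrbits (τ⁻¹ * γ) :=
    numOrbits_mul_swap_lt
      (fun z => by rw [← hτS, Perm.mul_apply, Perm.inv_def, apply_symm_apply, hS]) hu hv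
  have hconj := numOrbits_le_mul_swap (γ⁻¹ * τ * γ) u v
  rw [numOrbits_conj] at hconj
  rw [IsGeodesic, ← mul_assoc] at h
  rw [IsGeodesic, show (τ⁻¹ * γ)⁻¹ * (γ * swap u v) = γ⁻¹ * τ * γ * swap u v by group]
  omega

theorem IsGeodesic.exists_complement (hS : ∀ z, γ z ∈ S ↔ z ∈ S) (hu : u ∈ S) (hv : v ∉ S)
    (h : IsGeodesic τ (γ * swap u v)) :
    ∃ u' ∈ S, ∃ v' ∉ S, IsGeodesic (τ⁻¹ * γ) (γ * swap u' v') := by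
  by_cases hτ : ∀ z ∈ S, τ z ∈ S
  · exact ⟨u, hu, v, hv, isGeodesic_complement_of_mapsTo hS hu hv h hτ⟩
  · push Not at hτ
    obtain ⟨b, hb, hτb⟩ := hτ
    obtain ⟨a, rfl⟩ := γ.surjective b
    refine ⟨a, (hS a).1 hb, _, ?_, isGeodesic_complement_of_mem_of_notMem hS h hb hτb⟩
    rwa [← hS, Perm.inv_def, apply_symm_apply]

end Kreweras

end Geodesic

section FirstReturn

open Equiv

variable {α : Type*}

/-- `FirstReturn f B b c` says that `c` is the first of `f b, f (f b), ...` lying in `B`. It is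
the inductive counterpart of `induced`. -/
inductive FirstReturn (f : α → α) (B : Set α) : α → α → Prop
  | base (b : α) : f b ∈ B → FirstReturn f B b (f b)
  | step (b c : α) : f b ∉ B → FirstReturn f B (f b) c → FirstReturn f B b c

namespace FirstReturn

variable {f : α → α} {B : Set α} {b c c' : α}

theorem mem (h : FirstReturn f B b c) : c ∈ B := by
  induction h with
  | base _ h => exact h
  | step _ _ _ _ ih => exact ih

theorem unique (h : FirstReturn f B b c) (h' : FirstReturn f B b c') : c = c' := by
  induction h with
  | base _ hb =>
    cases h' with
    | base => rfl
    | step _ _ hb' => exact absurd hb hb'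
  | step _ _ hb _ ih =>
    cases h' with
    | base _ hb' => exact absurd hb' hb
    | step _ _ _ h' => exact ih h'

theorem sameCycle {π : Perm α} (h : FirstReturn π B b c) : π.SameCycle b c := by
  induction h with
  | base b _ => exact (Perm.SameCycle.refl π b).apply_right
  | step _ _ _ _ ih => exact Perm.sameCycle_apply_left.1 ih

theorem of_iterate (k : ℕ) (hk : f^[k + 1] b ∈ B)
    (hlt : ∀ j, 0 < j → j < k + 1 → f^[j] b ∉ B) : FirstReturn f B b (f^[k + 1] b) := by
  induction k generalizing b with
  | zero => exact base b hk
  | succ k ih =>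
    refine step b _ (hlt 1 one_pos (by omega)) ?_
    rw [Function.iterate_succ_apply] at hk ⊢
    refine ih hk fun j _ hj => ?_
    rw [← Function.iterate_succ_apply]
    exact hlt _ (by omega) (by omega)

end FirstReturn

section Induced

variable {B : Set α} {b c : α}

theorem firstReturn_induced_of_exists {f : α → α} (h : ∃ k, 0 < k ∧ f^[k] b ∈ B) :
    FirstReturn f B b (induced f B b) := by
  classical
  obtain ⟨k, hk⟩ := Nat.exists_eq_succ_of_ne_zero (Nat.find_spec h).1.ne'
  have hspec := (Nat.find_spec h).2
  have hmin : ∀ j, 0 < j → j < Nat.find h → f^[j] b ∉ B :=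
    fun j hj hjk hB => Nat.find_min h hjk ⟨hj, hB⟩
  rw [hk] at hspec hmin
  rw [induced, dif_pos h, hk]
  exact FirstReturn.of_iterate k hspec hmin

variable [Finite α]

theorem firstReturn_induced (π : Perm α) (hb : b ∈ B) : FirstReturn π B b (induced π B b) := by
  obtain ⟨n, hn, -, h⟩ := (Perm.SameCycle.refl π b).exists_pow_eq''
  exact firstReturn_induced_of_exists ⟨n, hn, by rwa [← Perm.coe_pow, h]⟩

theorem induced_mem (π : Perm α) (hb : b ∈ B) : induced π B b ∈ B :=
  (firstReturn_induced π hb).mem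

theorem sameCycle_induced (π : Perm α) (hb : b ∈ B) : π.SameCycle b (induced π B b) :=
  (firstReturn_induced π hb).sameCycle

theorem FirstReturn.induced_eq {π : Perm α} (hb : b ∈ B) (h : FirstReturn π B b c) :
    induced π B b = c :=
  (firstReturn_induced π hb).unique h

theorem induced_eq_apply {π : Perm α} (hb : b ∈ B) (hπb : π b ∈ B) : induced π B b = π b :=
  (FirstReturn.base b hπb).induced_eq hb

theorem mem_of_sameCycle_of_induced_mapsTo {π : Perm α} {P : Set α} (hPB : P ⊆ B)
    (hP : Set.MapsTo (induced π B) P P) (hb : b ∈ P) (hbc : π.SameCycle b c) (hc : c ∈ B) :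
    c ∈ P := by
  obtain ⟨n, rfl⟩ := hbc.exists_nat_pow_eq
  have key (n : ℕ) : ((π ^ n) b ∈ B → (π ^ n) b ∈ P) ∧
      ∃ w ∈ P, FirstReturn π B ((π ^ n) b) w := by
    induction n with
    | zero => exact ⟨fun _ => hb, _, hP hb, firstReturn_induced π (hPB hb)⟩
    | succ n ih =>
      obtain ⟨-, w, hw, hr⟩ := ih
      rw [pow_succ', Perm.mul_apply]
      cases hr with
      | base => exact ⟨fun _ => hw, _, hP hw, firstReturn_induced π (hPB hw)⟩
      | step _ _ hnot hr => exact ⟨fun h => absurd h hnot, w, hw, hr⟩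
  exact (key n).1 hc

theorem sameCycle_of_induced_eqOn {π π' : Perm α}
    (h : Set.EqOn (induced π B) (induced π' B) B) (hb : b ∈ B) (hc : c ∈ B)
    (hbc : π.SameCycle b c) : π'.SameCycle b c := by
  refine (mem_of_sameCycle_of_induced_mapsTo (P := {z ∈ B | π'.SameCycle b z})
    (Set.sep_subset _ _) (fun z hz => ?_) ⟨hb, Perm.SameCycle.refl _ _⟩ hbc hc).2
  rw [h hz.1]
  exact ⟨induced_mem π' hz.1, hz.2.trans (sameCycle_induced π' hz.1)⟩

theorem induced_ne_self {π : Perm α} (hb : b ∈ B) (hc : c ∈ B) (hbc : π.SameCycle b c)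
    (hne : b ≠ c) : induced π B b ≠ b := by
  intro h
  have hP : Set.MapsTo (induced π B) {b} {b} := by rintro _ rfl; exact h
  exact hne (mem_of_sameCycle_of_induced_mapsTo (Set.singleton_subset_iff.2 hb) hP rfl hbc hc).symm

theorem mapsSwap_of_sameCycle {π : Perm α} (hb : b ∈ B) (hc : c ∈ B) (hne : b ≠ c)
    (hbc : π.SameCycle b c) (honly : ∀ z ∈ B, π.SameCycle b z → z = b ∨ z = c) :
    MapsSwap π B b c :=
  ⟨(honly _ (induced_mem π hb) (sameCycle_induced π hb)).resolve_left
      (induced_ne_self hb hc hbc hne),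
    (honly _ (induced_mem π hc) (hbc.trans (sameCycle_induced π hc))).resolve_right
      (induced_ne_self hc hb hbc.symm hne.symm)⟩

theorem mapsCyc3_of_induced_eq {π : Perm α} {d : α} (hb : b ∈ B) (hd : d ∈ B)
    (hbc : b ≠ c) (hbd : b ≠ d) (hcd : c ≠ d) (hsbd : π.SameCycle b d)
    (honly : ∀ z ∈ B, π.SameCycle b z → z = b ∨ z = c ∨ z = d) (h : induced π B b = c) :
    MapsCyc3 π B b c d := by
  have hc : c ∈ B := h ▸ induced_mem π hb
  have hsbc : π.SameCycle b c := h ▸ sameCycle_induced π hb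
  have hc' := honly _ (induced_mem π hc) (hsbc.trans (sameCycle_induced π hc))
  have hd' := honly _ (induced_mem π hd) (hsbd.trans (sameCycle_induced π hd))
  have hcne := induced_ne_self hc hb hsbc.symm hbc.symm
  have hdne := induced_ne_self hd hb hsbd.symm hbd.symm
  have hcb : induced π B c ≠ b := fun hcb => by
    have := mem_of_sameCycle_of_induced_mapsTo (P := {b, c}) (Set.pair_subset hb hc)
      (by simp [Set.MapsTo, h, hcb]) (Set.mem_insert b _) hsbd hd
    grind
  have hc'd : induced π B c = d := by tauto
  have hdc : induced π B d ≠ c := fun hdc => by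
    have := mem_of_sameCycle_of_induced_mapsTo (P := {c, d}) (Set.pair_subset hc hd)
      (by simp [Set.MapsTo, hc'd, hdc]) (Set.mem_insert c _) hsbc.symm hb
    grind
  exact ⟨h, hc'd, by tauto⟩

end Induced

section Restriction

variable [DecidableEq α] {π : Perm α} {B : Set α} {x b c : α}

theorem FirstReturn.map_deletePoint (hx : x ∉ B) (h : FirstReturn π B b c) {b' : α}
    (hb : b = x → deletePoint π x b' = π x) (hb' : b ≠ x → b' = b) :
    FirstReturn (deletePoint π x) B b' c := by
  induction h generalizing b' with
  | base b hπb =>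
    have : deletePoint π x b' = π b := by
      by_cases hbx : b = x
      · rw [hb hbx, hbx]
      · rw [hb' hbx, deletePoint_apply_of_ne π (ne_of_mem_of_not_mem hπb hx) hbx]
    rw [← this] at hπb ⊢
    exact base b' hπb
  | step b c hπb _ ih =>
    by_cases hπx : π b = x
    · refine ih (fun _ => ?_) fun h => absurd hπx h
      by_cases hbx : b = x
      · exact hb hbx
      · rw [hb' hbx, deletePoint_apply_of_apply_eq π hπx]
    · have : deletePoint π x b' = π b := by
        by_cases hbx : b = x
        · rw [hb hbx, hbx]
        · rw [hb' hbx, deletePoint_apply_of_ne π hπx hbx]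
      refine step b' c (this ▸ hπb) ?_
      rw [this]
      exact ih (fun h => absurd h hπx) fun _ => rfl

/-- The permutation `π` with all the points of `l` cut out of their cycles. -/
def deletePoints (π : Perm α) (l : List α) : Perm α := l.foldl deletePoint π

theorem deletePoints_apply_of_fixed {l : List α} (h : π b = b) :
    deletePoints π l b = b := by
  induction l generalizing π with
  | nil => exact h
  | cons x _ ih =>
    refine ih ?_
    by_cases hx : b = x
    · rw [hx, deletePoint_apply_self]
    · rwa [deletePoint_apply_of_ne π (by rwa [h]) hx]

theorem deletePoints_apply_of_mem (π : Perm α) {l : List α} (hb : b ∈ l) :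
    deletePoints π l b = b := by
  induction l generalizing π with
  | nil => simp at hb
  | cons x l ih =>
    rcases List.mem_cons.1 hb with rfl | hb
    · exact deletePoints_apply_of_fixed (π := deletePoint π b) (l := l) (deletePoint_apply_self π b)
    · exact ih _ hb

variable [Finite α]

theorem induced_deletePoint (π : Perm α) (hx : x ∉ B) :
    Set.EqOn (induced (deletePoint π x) B) (induced π B) B := fun _ hb =>
  ((firstReturn_induced π hb).map_deletePoint hx
    (fun h => absurd (h ▸ hb) hx) fun _ => rfl).induced_eq hb

theorem sameCycle_deletePoint_iff (hb : b ≠ x) (hc : c ≠ x) :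
    (deletePoint π x).SameCycle b c ↔ π.SameCycle b c := by
  have h : Set.EqOn (induced (deletePoint π x) {x}ᶜ) (induced π {x}ᶜ) {x}ᶜ :=
    induced_deletePoint π (by simp)
  exact ⟨sameCycle_of_induced_eqOn h hb hc, sameCycle_of_induced_eqOn h.symm hb hc⟩

theorem induced_deletePoints (π : Perm α) {l : List α} (hl : ∀ x ∈ l, x ∉ B) :
    Set.EqOn (induced (deletePoints π l) B) (induced π B) B := by
  induction l generalizing π with
  | nil => exact fun _ _ => rfl
  | cons x l ih =>
    rw [List.forall_mem_cons] at hl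
    exact (ih _ hl.2).trans (induced_deletePoint π hl.1)

end Restriction

theorem IsGeodesic.map_deletePoints [Fintype α] [DecidableEq α] {τ γ : Perm α}
    (h : IsGeodesic τ γ) (l : List α) : IsGeodesic (deletePoints τ l) (deletePoints γ l) := by
  induction l generalizing τ γ with
  | nil => exact h
  | cons x _ ih => exact ih (h.map_deletePoint x)

-- Deleting the points outside `B` turns `induced _ B` into honest permutations.
theorem IsGeodesic.induced_eq_self [Fintype α] {B : Set α} {τ γ : Perm α} (h : IsGeodesic τ γ)
    (hsq : ∀ b ∈ B, induced τ B b = induced γ B (induced γ B b)) {b : α} (hb : b ∈ B) :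
    induced τ B b = b := by
  classical
  let l := {x | x ∉ B}.toFinset.toList
  have hl : ∀ x, x ∈ l ↔ x ∉ B := by simp [l]
  have hfix (π : Perm α) {x : α} (hx : x ∉ B) : deletePoints π l x = x :=
    deletePoints_apply_of_mem π ((hl x).2 hx)
  have hind (π : Perm α) {x : α} (hx : x ∈ B) : deletePoints π l x = induced π B x := by
    have hmem : deletePoints π l x ∈ B := by
      by_contra hnot
      exact hnot (by rwa [(deletePoints π l).injective (hfix π hnot)])
    rw [← induced_eq_apply hx hmem, induced_deletePoints π (fun x => (hl x).1) hx]
  have heq : deletePoints τ l = deletePoints γ l ^ 2 := by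
    ext x
    rw [pow_two, Perm.mul_apply]
    by_cases hx : x ∈ B
    · rw [hind τ hx, hind γ hx, hind γ (induced_mem γ hx), hsq x hx]
    · rw [hfix τ hx, hfix γ hx, hfix γ hx]
  have hone := (heq ▸ h.map_deletePoints l).eq_one_of_sq
  rw [← hind τ hb, heq, hone, Perm.one_apply]

end FirstReturn

section CyclicOrder

open Equiv

-- Cyclic betweenness `sbtw` of natural numbers: the numbers are placed in order on a circle.
attribute [local instance] LinearOrder.toCircularOrder

theorem nat_sbtw_iff {a b c : ℕ} :
    sbtw a b c ↔ a < b ∧ b < c ∨ b < c ∧ c < a ∨ c < a ∧ a < b := Iff.rfl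

variable {α : Type*}

/-- On `E`, the map `f` sends each point to the next one in the cyclic order of the positions
`pos`: no point of `E` lies cyclically between `a` and `f a`. -/
structure IsSuccOn (pos : α → ℕ) (f : α → α) (E : Set α) : Prop where
  mapsTo : Set.MapsTo f E E
  sbtw_apply : ∀ ⦃a⦄, a ∈ E → ∀ ⦃c⦄, c ∈ E → c ≠ a → c ≠ f a → sbtw (pos a) (pos (f a)) (pos c)

/-- `τ` is a disc noncrossing permutation for the cyclic order of the positions `pos`: it
advances cyclically along each of its orbits, and its orbits do not cross. -/
structure NoncrossingAlong (pos : α → ℕ) (τ : Perm α) : Prop where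
  sbtw_apply : ∀ ⦃a c⦄, τ.SameCycle a c → c ≠ a → c ≠ τ a → sbtw (pos a) (pos (τ a)) (pos c)
  sameCycle_of_lt : ∀ ⦃a b c d⦄, pos a < pos b → pos b < pos c → pos c < pos d →
    τ.SameCycle a c → τ.SameCycle b d → τ.SameCycle a b

section Succ

variable {pos : α → ℕ} {f g : α → α} {π : Perm α} {B E : Set α} {a b c d : α}

theorem IsSuccOn.sbtw_of_firstReturn (h : IsSuccOn pos f E) (hb : b ∈ E)
    (hbc : FirstReturn f B b c) (hdE : d ∈ E) (hd : d ∈ B) (hdb : d ≠ b) (hdc : d ≠ c) :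
    sbtw (pos b) (pos c) (pos d) := by
  induction hbc with
  | base => exact h.sbtw_apply hb hdE hdb hdc
  | step b c hfb _ ih =>
    have hdf : d ≠ f b := ne_of_mem_of_not_mem hd hfb
    exact sbtw_trans_left (h.sbtw_apply hb hdE hdb hdf) (ih (h.mapsTo hb) hdf hdc)

theorem IsSuccOn.congr_fun (h : IsSuccOn pos f E) (hfg : Set.EqOn f g E) :
    IsSuccOn pos g E where
  mapsTo := h.mapsTo.congr hfg
  sbtw_apply _ ha _ hc := hfg ha ▸ h.sbtw_apply ha hc

theorem isSuccOn_of_pos_apply {m n : ℕ} (hmaps : Set.MapsTo f E E) (hinj : Set.InjOn pos E)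
    (hpos : ∀ z ∈ E, m ≤ pos z ∧ pos z < n)
    (hf : ∀ z ∈ E, pos (f z) = if pos z + 1 < n then pos z + 1 else m) :
    IsSuccOn pos f E where
  mapsTo := hmaps
  sbtw_apply a ha c hc hca hcf := by
    have h1 := hinj.ne hc ha hca
    have h2 := hinj.ne hc (hmaps ha) hcf
    have := hpos a ha
    have := hpos c hc
    rw [hf a ha] at h2 ⊢
    rw [nat_sbtw_iff]
    split_ifs at h2 ⊢ <;> omega

theorem isSuccOn_formPerm [DecidableEq α] {l : List α} (hl : l.Pairwise (pos · < pos ·)) :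
    IsSuccOn pos l.formPerm {z | z ∈ l} where
  mapsTo _ := List.formPerm_apply_mem_of_mem
  sbtw_apply := by
    have hnodup : l.Nodup := hl.imp fun h => ne_of_apply_ne pos h.ne
    have hlt := List.pairwise_iff_getElem.1 hl
    intro a ha c hc hca hcf
    obtain ⟨i, hi, rfl⟩ := List.getElem_of_mem ha
    obtain ⟨j, hj, rfl⟩ := List.getElem_of_mem hc
    rw [List.formPerm_apply_getElem l hnodup] at hcf ⊢
    have hji : j ≠ i := fun h => hca (by subst h; rfl)
    have hji' : j ≠ (i + 1) % l.length := fun h => hcf (by subst h; rfl)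
    rw [nat_sbtw_iff]
    rcases Nat.lt_or_ge (i + 1) l.length with hi' | hi'
    · simp only [Nat.mod_eq_of_lt hi'] at hji' ⊢
      have := hlt i (i + 1) hi hi' (by omega)
      rcases lt_or_gt_of_ne hji with h | h
      · have := hlt j i hj hi h
        omega
      · have := hlt (i + 1) j hi' hj (by omega)
        omega
    · have hlen : i + 1 = l.length := by omega
      simp only [hlen, Nat.mod_self] at hji' ⊢
      have := hlt 0 j (by omega) hj (by omega)
      have := hlt j i hj hi (by omega)
      omega

theorem IsSuccOn.induced_eq_iff [Finite α] (h : IsSuccOn pos π E) (hBE : B ⊆ E) (hb : b ∈ B)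
    (hc : c ∈ B) :
    induced π B b = c ↔ ∀ d ∈ B, d ≠ b → d ≠ c → sbtw (pos b) (pos c) (pos d) := by
  have hret := firstReturn_induced π hb
  have hsucc : ∀ d ∈ B, d ≠ b → d ≠ induced π B b → sbtw (pos b) (pos (induced π B b)) (pos d) :=
    fun d hd => h.sbtw_of_firstReturn (hBE hb) hret (hBE hd) hd
  refine ⟨fun hbc => hbc ▸ hsucc, fun hsucc' => ?_⟩
  have h1 := hsucc c hc
  have h2 := hsucc' _ hret.mem
  simp only [nat_sbtw_iff] at h1 h2
  by_contra hne
  rcases eq_or_ne c b with rfl | hcb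
  · have := h2 hne hne
    omega
  rcases eq_or_ne (induced π B b) b with hb' | hb'
  · rw [hb'] at h1 hne
    have := h1 hcb hcb
    omega
  · have := h1 hcb (Ne.symm hne)
    have := h2 hb' hne
    omega

theorem IsSuccOn.sbtw_apply_of_induced_eq [Finite α] {τ : Perm α} (h : IsSuccOn pos π E)
    (hBE : B ⊆ E) (ha : a ∈ B) (hτa : τ a ∈ B) (hc : c ∈ B) (hca : c ≠ a) (hcτ : c ≠ τ a)
    (hind : induced τ B a = induced π B a) :
    sbtw (pos a) (pos (τ a)) (pos c) :=
  (h.induced_eq_iff hBE ha hτa).1 (hind.symm.trans (induced_eq_apply ha hτa)) c hc hca hcτ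

theorem IsSuccOn.induced_eq_induced [Finite α] {π' : Perm α} {E' : Set α} (h : IsSuccOn pos π E)
    (h' : IsSuccOn pos π' E') (hBE : B ⊆ E) (hBE' : B ⊆ E') (hb : b ∈ B) :
    induced π B b = induced π' B b :=
  (h.induced_eq_iff hBE hb (induced_mem π' hb)).2
    ((h'.induced_eq_iff hBE' hb (induced_mem π' hb)).1 rfl)

theorem pairwise_ne_of_sbtw (habc : sbtw (pos a) (pos b) (pos c))
    (hacd : sbtw (pos a) (pos c) (pos d)) :
    [a, b, c, d].Pairwise (· ≠ ·) := by
  refine List.Pairwise.imp (R := (pos · ≠ pos ·)) (ne_of_apply_ne pos) ?_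
  rw [nat_sbtw_iff] at habc hacd
  simp only [List.pairwise_cons, List.mem_cons, forall_eq_or_imp, List.not_mem_nil,
    false_imp_iff, implies_true, List.Pairwise.nil, and_true]
  omega

theorem IsSuccOn.mapsCyc3_iff [Finite α] (h : IsSuccOn pos π E) (ha : a ∈ E) (hb : b ∈ E)
    (hc : c ∈ E) (hab : a ≠ b) (hac : a ≠ c) (hbc : b ≠ c) :
    MapsCyc3 π {a, b, c} a b c ↔ sbtw (pos a) (pos b) (pos c) := by
  have hsub : ({a, b, c} : Set α) ⊆ E := by simp [Set.insert_subset_iff, *]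
  simp only [MapsCyc3]
  rw [h.induced_eq_iff hsub (by simp) (by simp), h.induced_eq_iff hsub (by simp) (by simp),
    h.induced_eq_iff hsub (by simp) (by simp)]
  simp [hab, hab.symm, hac, hac.symm, hbc, hbc.symm, nat_sbtw_iff]
  omega

theorem IsSuccOn.mapsCyc4_iff [Finite α] (h : IsSuccOn pos π E) (ha : a ∈ E) (hb : b ∈ E)
    (hc : c ∈ E) (hd : d ∈ E) (hne : [a, b, c, d].Pairwise (· ≠ ·)) :
    MapsCyc4 π {a, b, c, d} a b c d ↔
      sbtw (pos a) (pos b) (pos c) ∧ sbtw (pos a) (pos c) (pos d) := by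
  have hsub : ({a, b, c, d} : Set α) ⊆ E := by simp [Set.insert_subset_iff, *]
  simp only [MapsCyc4]
  rw [h.induced_eq_iff hsub (by simp) (by simp), h.induced_eq_iff hsub (by simp) (by simp),
    h.induced_eq_iff hsub (by simp) (by simp), h.induced_eq_iff hsub (by simp) (by simp)]
  simp only [List.pairwise_cons, List.mem_cons, forall_eq_or_imp, List.not_mem_nil] at hne
  obtain ⟨⟨hab, hac, had, -⟩, ⟨hbc, hbd, -⟩, ⟨hcd, -⟩, -⟩ := hne
  simp [hab, hab.symm, hac, hac.symm, had, had.symm, hbc, hbc.symm, hbd, hbd.symm, hcd, hcd.symm,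
    nat_sbtw_iff]
  omega

theorem IsSuccOn.map_deletePoint [DecidableEq α] (h : IsSuccOn pos π E) (x : α) :
    IsSuccOn pos (deletePoint π x) (E \ {x}) where
  mapsTo := by
    rintro a ⟨ha, hax⟩
    refine ⟨?_, fun hx => hax ((deletePoint_apply_eq_self_iff π).1 hx)⟩
    by_cases hπa : π a = x
    · rw [deletePoint_apply_of_apply_eq π hπa, ← hπa]
      exact h.mapsTo (h.mapsTo ha)
    · rw [deletePoint_apply_of_ne π hπa hax]
      exact h.mapsTo ha
  sbtw_apply := by
    rintro a ⟨ha, hax⟩ c ⟨hc, hcx⟩ hca hcπ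
    by_cases hπa : π a = x
    · subst hπa
      rw [deletePoint_apply_of_apply_eq π rfl] at hcπ ⊢
      exact sbtw_trans_left (h.sbtw_apply ha hc hca hcx) (h.sbtw_apply (h.mapsTo ha) hc hcx hcπ)
    · rw [deletePoint_apply_of_ne π hπa hax] at hcπ ⊢
      exact h.sbtw_apply ha hc hca hcπ

end Succ

section Noncrossing

variable {pos : α → ℕ} {τ γ : Perm α} {a b c d : α}

theorem NoncrossingAlong.isSuccOn_orbit (h : NoncrossingAlong pos τ) (a : α) :
    IsSuccOn pos τ {b | τ.SameCycle a b} where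
  mapsTo _ hb := hb.apply_right
  sbtw_apply _ hb _ hc := h.sbtw_apply (hb.symm.trans hc)

theorem NoncrossingAlong.sbtw_of_induced_eq [Finite α] {B : Set α} (h : NoncrossingAlong pos τ)
    (hb : b ∈ B) (hbc : induced τ B b = c) (hd : d ∈ B) (hbd : τ.SameCycle b d) (hdb : d ≠ b)
    (hdc : d ≠ c) : sbtw (pos b) (pos c) (pos d) :=
  (h.isSuccOn_orbit b).sbtw_of_firstReturn (Perm.SameCycle.refl τ b)
    (hbc ▸ firstReturn_induced τ hb) hbd hd hdb hdc

theorem NoncrossingAlong.sameCycle_of_sbtw (h : NoncrossingAlong pos τ)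
    (habc : sbtw (pos a) (pos b) (pos c)) (hacd : sbtw (pos a) (pos c) (pos d))
    (hac : τ.SameCycle a c) (hbd : τ.SameCycle b d) : τ.SameCycle a b := by
  rw [nat_sbtw_iff] at habc hacd
  rcases lt_or_ge (pos a) (pos b) with h1 | h1 <;> rcases lt_or_ge (pos b) (pos c) with h2 | h2 <;>
    rcases lt_or_ge (pos c) (pos d) with h3 | h3
  all_goals try omega
  · exact h.sameCycle_of_lt h1 h2 h3 hac hbd
  · exact (hbd.trans (h.sameCycle_of_lt (by omega) h1 h2 hbd.symm hac)).symm
  · exact hac.trans (h.sameCycle_of_lt h3 (by omega) h1 hac.symm hbd.symm) |>.trans hbd.symm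
  · exact (h.sameCycle_of_lt h2 h3 (by omega) hbd hac.symm).trans hac.symm |>.symm

theorem NoncrossingAlong.map_deletePoint [Finite α] [DecidableEq α] (h : NoncrossingAlong pos τ)
    (x : α) : NoncrossingAlong pos (deletePoint τ x) := by
  have hne : ∀ {b c}, (deletePoint τ x).SameCycle b c → b ≠ c → b ≠ x ∧ c ≠ x := by
    intro b c hbc hne
    constructor <;> rintro rfl
    · exact hne (hbc.eq_of_left (deletePoint_apply_self τ b))
    · exact hne (hbc.eq_of_right (deletePoint_apply_self τ c))
  have hiff : ∀ {b c}, (deletePoint τ x).SameCycle b c → b ≠ c → τ.SameCycle b c :=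
    fun hbc hbne => (sameCycle_deletePoint_iff (hne hbc hbne).1 (hne hbc hbne).2).1 hbc
  constructor
  · intro a c hac hca hcτ
    have hax := (hne hac hca.symm).1
    have hcx := (hne hac hca.symm).2
    have hac' := hiff hac hca.symm
    by_cases hτa : τ a = x
    · subst hτa
      rw [deletePoint_apply_of_apply_eq τ rfl] at hcτ ⊢
      exact sbtw_trans_left (h.sbtw_apply hac' hca hcx)
        (h.sbtw_apply (Perm.sameCycle_apply_left.2 hac') hcx hcτ)
    · rw [deletePoint_apply_of_ne τ hτa hax] at hcτ ⊢
      exact h.sbtw_apply hac' hca hcτ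
  · intro a b c d hab hbc hcd hac hbd
    have hac' : a ≠ c := fun e => (hab.trans hbc).ne (congrArg pos e)
    have hbd' : b ≠ d := fun e => (hbc.trans hcd).ne (congrArg pos e)
    rw [sameCycle_deletePoint_iff (hne hac hac').1 (hne hbd hbd').1]
    exact h.sameCycle_of_lt hab hbc hcd (hiff hac hac') (hiff hbd hbd')

-- If `τ a ≠ c` then `(a, τ a)` is closer. Otherwise `γ a` lies strictly between `a` and `c`; its
-- image under `τ` is trapped there as well, unless already `(a, γ a)` is closer.
theorem NoncrossingAlong.exists_closer_pair (hτ : NoncrossingAlong pos τ) {E : Set α}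
    (hγ : IsSuccOn pos γ E) (hinj : Set.InjOn pos E) (hmem : Set.MapsTo τ E E)
    (hmove : ∀ x ∈ E, τ x ≠ x) (hne : ∀ x ∈ E, τ x ≠ γ x) (ha : a ∈ E) (hc : c ∈ E)
    (hac : τ.SameCycle a c) (hlt : pos a < pos c) :
    ∃ a' ∈ E, ∃ c' ∈ E, τ.SameCycle a' c' ∧ pos a' < pos c' ∧
      pos c' - pos a' < pos c - pos a := by
  have hca : c ≠ a := fun e => hlt.ne (congrArg pos e.symm)
  have haτ : τ.SameCycle a (τ a) := (Perm.SameCycle.refl τ a).apply_right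
  by_cases hτa : c = τ a
  · have hb := hγ.mapsTo ha
    have hbtw := nat_sbtw_iff.1 (hγ.sbtw_apply ha hc hca (hτa ▸ hne a ha))
    by_cases hab : τ.SameCycle a (γ a)
    · exact ⟨a, ha, γ a, hb, hab, by omega, by omega⟩
    obtain ⟨b, hbγ⟩ : ∃ b, b = γ a := ⟨_, rfl⟩
    rw [← hbγ] at hb hbtw hab
    have hbd : τ.SameCycle b (τ b) := (Perm.SameCycle.refl τ b).apply_right
    have hda : pos (τ b) ≠ pos a := fun e => hab (hinj (hmem hb) ha e ▸ hbd.symm)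
    have hdc : pos (τ b) ≠ pos c := fun e => hab (hac.trans (hinj (hmem hb) hc e ▸ hbd.symm))
    have hdb : pos (τ b) ≠ pos b := hinj.ne (hmem hb) hb (hmove b hb)
    have hleft : ¬ pos (τ b) < pos a := fun hlt =>
      hab ((hτ.sameCycle_of_lt hlt (by omega) (by omega) hbd.symm hac).symm.trans hbd.symm)
    have hright : ¬ pos c < pos (τ b) := fun hlt =>
      hab (hτ.sameCycle_of_lt (by omega) (by omega) hlt hac hbd)
    rcases hdb.lt_or_gt with hdb | hbd'
    · exact ⟨τ b, hmem hb, b, hb, hbd.symm, hdb, by omega⟩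
    · exact ⟨b, hb, τ b, hmem hb, hbd, hbd', by omega⟩
  · have hbtw := nat_sbtw_iff.1 (hτ.sbtw_apply hac hca hτa)
    exact ⟨a, ha, τ a, hmem ha, haτ, by omega, by omega⟩

theorem NoncrossingAlong.exists_apply_eq_self_or_apply_eq (hτ : NoncrossingAlong pos τ)
    {E : Set α} (hγ : IsSuccOn pos γ E) (hinj : Set.InjOn pos E) (hfix : ∀ x ∉ E, τ x = x)
    (hE : E.Nonempty) : ∃ x ∈ E, τ x = x ∨ τ x = γ x ∧ γ x ≠ x := by
  by_contra! hcon
  have hmove : ∀ x ∈ E, τ x ≠ x := fun x hx => (hcon x hx).1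
  have hne : ∀ x ∈ E, τ x ≠ γ x := fun x hx heq =>
    hmove x hx (heq.trans ((hcon x hx).2 heq))
  have hmem : Set.MapsTo τ E E := fun x hx => by
    by_contra hnot
    exact hmove x hx (τ.injective (hfix _ hnot))
  have hnopair (a c : α) (ha : a ∈ E) (hc : c ∈ E) (hac : τ.SameCycle a c) :
      ¬ pos a < pos c := by
    induction hgap : pos c - pos a using Nat.strong_induction_on generalizing a c with
    | _ n ih =>
    intro hlt
    obtain ⟨a', ha', c', hc', hac', hlt', hgap'⟩ :=
      hτ.exists_closer_pair hγ hinj hmem hmove hne ha hc hac hlt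
    exact ih _ (hgap ▸ hgap') a' c' ha' hc' hac' rfl hlt'
  obtain ⟨x, hx⟩ := hE
  have hxτ : τ.SameCycle x (τ x) := (Perm.SameCycle.refl τ x).apply_right
  exact (hinj.ne (hmem hx) hx (hmove x hx)).lt_or_gt.elim
    (hnopair _ _ (hmem hx) hx hxτ.symm) (hnopair _ _ hx (hmem hx) hxτ)

theorem NoncrossingAlong.isGeodesic_of_finset [Fintype α] (hτ : NoncrossingAlong pos τ)
    {E : Finset α} (hγ : IsSuccOn pos γ E) (hinj : Set.InjOn pos E)
    (hτfix : ∀ x ∉ E, τ x = x) (hγfix : ∀ x ∉ E, γ x = x) : IsGeodesic τ γ := by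
  classical
  induction E using Finset.strongInduction generalizing τ γ with
  | _ E ih =>
  rcases E.eq_empty_or_nonempty with rfl | hE
  · obtain rfl : τ = 1 := by ext x; exact hτfix x (by simp)
    obtain rfl : γ = 1 := by ext x; exact hγfix x (by simp)
    exact isGeodesic_one
  obtain ⟨x, hx, hx'⟩ := hτ.exists_apply_eq_self_or_apply_eq hγ hinj hτfix hE
  have hfix {π : Perm α} (hπ : ∀ y ∉ E, π y = y) (y : α) (hy : y ∉ E.erase x) :
      deletePoint π x y = y := by
    rcases eq_or_ne y x with rfl | hyx
    · exact deletePoint_apply_self π y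
    · have hπy : π y = y := hπ y fun hyE => hy (Finset.mem_erase.2 ⟨hyx, hyE⟩)
      rw [deletePoint_apply_of_ne π (by rwa [hπy]) hyx, hπy]
  have hdel : IsGeodesic (deletePoint τ x) (deletePoint γ x) :=
    ih (E.erase x) (Finset.erase_ssubset hx) (hτ.map_deletePoint x)
      (by rw [Finset.coe_erase]; exact hγ.map_deletePoint x)
      (hinj.mono (Finset.coe_subset.2 (Finset.erase_subset x E))) (hfix hτfix) (hfix hγfix)
  rcases hx' with hτx | ⟨hτx, hγx⟩
  · exact hdel.of_deletePoint_of_fixed hτx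
  · exact hdel.of_deletePoint_of_apply_eq hτx hγx

theorem NoncrossingAlong.isGeodesic [Fintype α] (hτ : NoncrossingAlong pos τ)
    (hγ : IsSuccOn pos γ Set.univ) (hinj : Function.Injective pos) : IsGeodesic τ γ :=
  hτ.isGeodesic_of_finset (E := Finset.univ) (by simpa using hγ) hinj.injOn (by simp) (by simp)

theorem IsGeodesic.sbtw_apply [Fintype α] (h : IsGeodesic τ γ) (hγ : IsSuccOn pos γ Set.univ)
    (hinj : Function.Injective pos) (hac : τ.SameCycle a c) (hca : c ≠ a) (hcτ : c ≠ τ a) :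
    sbtw (pos a) (pos (τ a)) (pos c) := by
  have hτa : a ≠ τ a := fun e => hca (hac.eq_of_left e.symm).symm
  by_contra hbtw
  have hbtw' : sbtw (pos a) (pos c) (pos (τ a)) := by
    have := hinj.ne hca; have := hinj.ne hcτ; have := hinj.ne hτa
    rw [nat_sbtw_iff] at hbtw ⊢
    omega
  have hγ3 := (hγ.mapsCyc3_iff trivial trivial trivial hca.symm hτa hcτ).2 hbtw'
  have hτ3 : MapsCyc3 τ {a, c, τ a} a (τ a) c :=
    mapsCyc3_of_induced_eq (by simp) (by simp) hτa hca.symm hcτ.symm hac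
      (by simp only [Set.mem_insert_iff, Set.mem_singleton_iff]; tauto)
      (induced_eq_apply (by simp) (by simp))
  refine hτa (Eq.trans (Eq.symm (h.induced_eq_self (B := {a, c, τ a}) ?_ (by simp))) hτ3.1)
  rintro _ (rfl | rfl | rfl)
  · rw [hτ3.1, hγ3.1, hγ3.2.1]
  · rw [hτ3.2.2, hγ3.2.1, hγ3.2.2]
  · rw [hτ3.2.1, hγ3.2.2, hγ3.1]

theorem IsGeodesic.sameCycle_of_lt [Fintype α] (h : IsGeodesic τ γ)
    (hγ : IsSuccOn pos γ Set.univ) (hab : pos a < pos b) (hbc : pos b < pos c)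
    (hcd : pos c < pos d) (hac : τ.SameCycle a c) (hbd : τ.SameCycle b d) :
    τ.SameCycle a b := by
  by_contra hnot
  have hne : [a, b, c, d].Pairwise (· ≠ ·) := by
    refine List.Pairwise.of_map pos (fun _ _ => ne_of_apply_ne pos) (S := (· ≠ ·)) ?_
    simp
    omega
  have hγ4 := (hγ.mapsCyc4_iff trivial trivial trivial trivial hne).2
    (by simp only [nat_sbtw_iff]; omega)
  have hne' : a ≠ c ∧ b ≠ d := by simp at hne; tauto
  have hτac : MapsSwap τ {a, b, c, d} a c := by
    refine mapsSwap_of_sameCycle (by simp) (by simp) hne'.1 hac ?_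
    rintro _ (rfl | rfl | rfl | rfl) hz
    · exact Or.inl rfl
    · exact absurd hz hnot
    · exact Or.inr rfl
    · exact absurd (hz.trans hbd.symm) hnot
  have hτbd : MapsSwap τ {a, b, c, d} b d := by
    refine mapsSwap_of_sameCycle (by simp) (by simp) hne'.2 hbd ?_
    rintro _ (rfl | rfl | rfl | rfl) hz
    · exact absurd hz.symm hnot
    · exact Or.inl rfl
    · exact absurd (hac.trans hz.symm) hnot
    · exact Or.inr rfl
  refine hne'.1 (Eq.trans (Eq.symm (h.induced_eq_self (B := {a, b, c, d}) ?_ (by simp))) hτac.1)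
  obtain ⟨hγa, hγb, hγc, hγd⟩ := hγ4
  rintro _ (rfl | rfl | rfl | rfl)
  · rw [hτac.1, hγa, hγb]
  · rw [hτbd.1, hγb, hγc]
  · rw [hτac.2, hγc, hγd]
  · rw [hτbd.2, hγd, hγa]

theorem IsGeodesic.noncrossingAlong [Fintype α] (h : IsGeodesic τ γ)
    (hγ : IsSuccOn pos γ Set.univ) (hinj : Function.Injective pos) : NoncrossingAlong pos τ where
  sbtw_apply _ _ := h.sbtw_apply hγ hinj
  sameCycle_of_lt _ _ _ _ := h.sameCycle_of_lt hγ

theorem isGeodesic_iff_noncrossingAlong [Fintype α] (hγ : IsSuccOn pos γ Set.univ)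
    (hinj : Function.Injective pos) : IsGeodesic τ γ ↔ NoncrossingAlong pos τ :=
  ⟨fun h => h.noncrossingAlong hγ hinj, fun h => h.isGeodesic hγ hinj⟩

end Noncrossing

section Crossing

variable {pos : α → ℕ} {τ : Perm α} {B S : Set α} {a b c d x y : α}

theorem pos_mem_Icc_of_forall_lt_apply [Finite α] {w : α}
    (h : ∀ b, τ.SameCycle w b → b ≠ w → pos b < pos (τ b)) (hwa : τ.SameCycle w a) :
    pos a ∈ Set.Icc (pos (τ w)) (pos w) := by
  have hne : {b | τ.SameCycle w b}.Nonempty := ⟨w, .refl τ w⟩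
  obtain ⟨m, hm, hmax⟩ := Set.exists_max_image _ pos (Set.toFinite _) hne
  obtain ⟨n, hn, hmin⟩ := Set.exists_min_image _ pos (Set.toFinite _) hne
  obtain ⟨k, rfl⟩ := τ.surjective n
  have hk : τ.SameCycle w k := Perm.sameCycle_apply_right.1 hn
  have hmw : m = w := by
    by_contra hmw
    exact (h m hm hmw).not_ge (hmax _ hm.apply_right)
  have hkw : k = w := by
    by_contra hkw
    exact (h k hk hkw).not_ge (hmin k hk)
  exact ⟨hkw ▸ hmin a hwa, hmw ▸ hmax a hwa⟩

theorem exists_sameCycle_apply_notMem [Finite α] (hb : b ∈ S) (hd : d ∉ S)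
    (hbd : τ.SameCycle b d) : ∃ a, τ.SameCycle b a ∧ a ∈ S ∧ τ a ∉ S := by
  by_contra! h
  obtain ⟨n, rfl⟩ := hbd.exists_nat_pow_eq
  have key (k : ℕ) : (τ ^ k) b ∈ S := by
    induction k with
    | zero => exact hb
    | succ k ih =>
      rw [pow_succ', Perm.mul_apply]
      exact h _ ⟨k, by simp⟩ ih
  exact hd (key n)

theorem mem_iff_mem_of_sameCycle [Finite α] (hS : ∀ z, τ z ∈ S ↔ z ∈ S) (hbd : τ.SameCycle b d) :
    b ∈ S ↔ d ∈ S := by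
  have hmem {b d : α} (hbd : τ.SameCycle b d) (hb : b ∈ S) : d ∈ S := by
    by_contra hd
    obtain ⟨a, -, ha, hτa⟩ := exists_sameCycle_apply_notMem hb hd hbd
    exact hτa ((hS a).2 ha)
  exact ⟨hmem hbd, hmem hbd.symm⟩

theorem NoncrossingAlong.existsUnique_apply_notMem [Finite α] (h : NoncrossingAlong pos τ)
    (hS : ∀ a ∈ S, ∀ b ∈ S, ∀ c ∉ S, ∀ d ∉ S,
      sbtw (pos a) (pos c) (pos b) → ¬ sbtw (pos b) (pos d) (pos a))
    (hb : b ∈ S) (hd : d ∉ S) (hbd : τ.SameCycle b d) :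
    ∃! a, (τ.SameCycle b a ∧ a ∈ S) ∧ τ a ∉ S := by
  obtain ⟨a, hba, ha, hτa⟩ := exists_sameCycle_apply_notMem hb hd hbd
  refine ⟨a, ⟨⟨hba, ha⟩, hτa⟩, fun a' ⟨⟨hba', ha'⟩, hτa'⟩ => ?_⟩
  by_contra hne
  have haa' := hba.symm.trans hba'
  exact hS a ha a' ha' _ hτa _ hτa'
    (h.sbtw_apply haa' hne (ne_of_mem_of_not_mem ha' hτa))
    (h.sbtw_apply haa'.symm (Ne.symm hne) (ne_of_mem_of_not_mem ha hτa'))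

theorem NoncrossingAlong.not_mapsSwap2 [Finite α] (h : NoncrossingAlong pos τ) (ha : a ∈ B)
    (hb : b ∈ B) (habc : sbtw (pos a) (pos b) (pos c)) (hacd : sbtw (pos a) (pos c) (pos d)) :
    ¬ MapsSwap2 τ B a b c d := by
  rintro ⟨hac, -, hbd, -⟩
  have hab : τ.SameCycle a b :=
    h.sameCycle_of_sbtw habc hacd (hac ▸ sameCycle_induced τ ha) (hbd ▸ sameCycle_induced τ hb)
  have hba : b ≠ a := by rintro rfl; exact sbtw_irrefl_left habc
  have hbc : b ≠ c := by rintro rfl; exact sbtw_irrefl_right habc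
  have hacb := h.sbtw_of_induced_eq ha hac hb hab hba hbc
  exact sbtw_asymm habc hacb.cyclic_left

theorem NoncrossingAlong.not_sameCycle_of_mapsSwap [Finite α] (h : NoncrossingAlong pos τ)
    (hxy : MapsSwap τ B x y) (hx : x ∈ B) (hy : y ∈ B) (ha : a ∈ B) (hax : a ≠ x)
    (hay : a ≠ y) : ¬ τ.SameCycle x a := by
  intro hxa
  have hyx : τ.SameCycle y x := hxy.2 ▸ sameCycle_induced τ hy
  have hxya := h.sbtw_of_induced_eq hx hxy.1 ha hxa hax hay
  have hyxa := h.sbtw_of_induced_eq hy hxy.2 ha (hyx.trans hxa) hay hax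
  exact sbtw_asymm hxya hyxa.cyclic_right

end Crossing

end CyclicOrder

section Annulus

open Equiv

attribute [local instance] LinearOrder.toCircularOrder

variable {p q : ℕ}

section Gamma

variable {z : Fin (p + q)}

theorem notMem_extSet_iff : z ∉ extSet p q ↔ z ∈ intSet p q := not_lt (a := (z : ℕ))

theorem notMem_intSet_iff : z ∉ intSet p q ↔ z ∈ extSet p q := not_le (b := (z : ℕ))

theorem gammaExt_apply_val (hz : (z : ℕ) < p) :
    (gammaExt p q z : ℕ) = if (z : ℕ) + 1 < p then (z : ℕ) + 1 else 0 := by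
  have hz' : (z : ℕ) < ((List.finRange (p + q)).take p).length := by simpa using hz
  have h := List.formPerm_apply_getElem _ ((List.nodup_finRange (p + q)).take (i := p)) z hz'
  have h' := congrArg Fin.val h
  simp only [List.getElem_take, List.getElem_finRange, Fin.cast_mk, Fin.eta, List.length_take,
    List.length_finRange, le_add_iff_nonneg_right, zero_le, inf_of_le_left] at h'
  rw [gammaExt, h']
  split_ifs with h1
  · exact Nat.mod_eq_of_lt h1
  · rw [show (z : ℕ) + 1 = p by omega, Nat.mod_self]

theorem gammaExt_apply_of_le (hz : p ≤ z) : gammaExt p q z = z := by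
  refine List.formPerm_apply_of_notMem fun h => ?_
  obtain ⟨i, hi, rfl⟩ := List.getElem_of_mem h
  simp at hi hz
  omega

theorem gammaInt_apply_val (hz : p ≤ z) :
    (gammaInt p q z : ℕ) = if (z : ℕ) + 1 < p + q then (z : ℕ) + 1 else p := by
  have hz' : (z : ℕ) - p < ((List.finRange (p + q)).drop p).length := by simp; omega
  have h := List.formPerm_apply_getElem _ ((List.nodup_finRange (p + q)).drop (i := p)) _ hz'
  have h' := congrArg Fin.val h
  simp only [List.getElem_drop, Nat.add_sub_cancel' hz, List.getElem_finRange, Fin.cast_mk,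
    Fin.eta, List.length_drop, List.length_finRange, add_tsub_cancel_left] at h'
  rw [gammaInt, h']
  split_ifs with h1
  · rw [Nat.mod_eq_of_lt] <;> omega
  · rw [show (z : ℕ) - p + 1 = q by omega, Nat.mod_self, add_zero]

theorem gammaInt_apply_of_lt (hz : (z : ℕ) < p) : gammaInt p q z = z := by
  refine List.formPerm_apply_of_notMem fun h => ?_
  obtain ⟨i, hi, rfl⟩ := List.getElem_of_mem h
  simp at hi hz

theorem eqOn_gammaExt_gammaAnn : Set.EqOn (gammaExt p q) (gammaAnn p q) (extSet p q) :=
  fun z hz => by rw [gammaAnn, Perm.mul_apply, gammaInt_apply_of_lt hz]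

theorem eqOn_gammaInt_gammaAnn : Set.EqOn (gammaInt p q) (gammaAnn p q) (intSet p q) := by
  intro z (hz : p ≤ (z : ℕ))
  rw [gammaAnn, Perm.mul_apply, gammaExt_apply_of_le]
  rw [gammaInt_apply_val hz]
  split_ifs <;> omega

theorem gammaAnn_apply_lt_iff : (gammaAnn p q z : ℕ) < p ↔ (z : ℕ) < p := by
  rcases lt_or_ge (z : ℕ) p with hz | hz
  · rw [← eqOn_gammaExt_gammaAnn hz, gammaExt_apply_val hz]
    split_ifs <;> omega
  · rw [← eqOn_gammaInt_gammaAnn hz, gammaInt_apply_val hz]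
    split_ifs <;> omega

end Gamma

/-- A cut of the `(p,q)`-annulus from just after an external point `ext` to just after an internal
point `int`. It opens the annulus into a disc. -/
structure AnnularCut (p q : ℕ) where
  ext : Fin (p + q)
  int : Fin (p + q)
  ext_lt : (ext : ℕ) < p
  le_int : p ≤ (int : ℕ)

namespace AnnularCut

variable {z : Fin (p + q)} (c : AnnularCut p q)

/-- The boundary permutation `(γ ext, ..., ext, γ int, ..., int)` of the disc obtained by
cutting. -/
def perm : Perm (Fin (p + q)) := gammaAnn p q * swap c.ext c.int

/-- The position of `z` along the boundary `γ ext, ..., ext, γ int, ..., int` of the disc obtained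
by cutting, counted from `0`. -/
def pos (z : Fin (p + q)) : ℕ :=
  if (z : ℕ) < p then
    if (c.ext : ℕ) < z then (z : ℕ) - c.ext - 1 else (z : ℕ) + p - c.ext - 1
  else
    p + if (c.int : ℕ) < z then (z : ℕ) - c.int - 1 else (z : ℕ) + q - c.int - 1

theorem ext_ne_int : c.ext ≠ c.int :=
  fun h => (c.ext_lt.trans_le c.le_int).ne (congrArg Fin.val h)

theorem pos_lt_iff : c.pos z < p ↔ (z : ℕ) < p := by
  have := c.ext_lt
  rw [pos]
  split_ifs <;> omega

theorem pos_lt_add : c.pos z < p + q := by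
  have := c.ext_lt
  have := c.le_int
  rw [pos]
  split_ifs <;> omega

theorem pos_injective : Function.Injective c.pos := by
  intro z w h
  have := c.ext_lt
  have := c.le_int
  simp only [pos] at h
  split_ifs at h <;> omega

theorem pos_ext : c.pos c.ext = p - 1 := by
  have := c.ext_lt
  rw [pos]
  split_ifs <;> omega

theorem pos_int : c.pos c.int = p + q - 1 := by
  have := c.le_int
  rw [pos]
  split_ifs <;> omega

theorem pos_gammaExt (hz : z ∈ extSet p q) :
    c.pos (gammaExt p q z) = if c.pos z + 1 < p then c.pos z + 1 else 0 := by
  have := c.ext_lt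
  have hγ := gammaExt_apply_val (q := q) hz
  have hz : (z : ℕ) < p := hz
  simp only [pos, hγ]
  split_ifs <;> omega

theorem pos_gammaInt (hz : z ∈ intSet p q) :
    c.pos (gammaInt p q z) = if c.pos z + 1 < p + q then c.pos z + 1 else p := by
  have := c.le_int
  have hγ := gammaInt_apply_val hz
  have hz : p ≤ (z : ℕ) := hz
  simp only [pos, hγ]
  split_ifs <;> omega

theorem isSuccOn_gammaExt : IsSuccOn c.pos (gammaExt p q) (extSet p q) :=
  isSuccOn_of_pos_apply (m := 0) (n := p)
    (fun z hz => by
      change (gammaExt p q z : ℕ) < p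
      rwa [eqOn_gammaExt_gammaAnn hz, gammaAnn_apply_lt_iff])
    c.pos_injective.injOn (fun z hz => ⟨Nat.zero_le _, c.pos_lt_iff.2 hz⟩)
    fun z hz => c.pos_gammaExt hz

theorem isSuccOn_gammaInt : IsSuccOn c.pos (gammaInt p q) (intSet p q) :=
  isSuccOn_of_pos_apply
    (fun z hz => by
      change p ≤ (gammaInt p q z : ℕ)
      rwa [eqOn_gammaInt_gammaAnn hz, ← not_lt, gammaAnn_apply_lt_iff, not_lt])
    c.pos_injective.injOn (fun z hz => ⟨not_lt.1 (c.pos_lt_iff.not.2 (not_lt.2 hz)), c.pos_lt_add⟩)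
    fun z hz => c.pos_gammaInt hz

theorem isSuccOn_perm : IsSuccOn c.pos c.perm Set.univ := by
  refine isSuccOn_of_pos_apply (m := 0) (n := p + q) (Set.mapsTo_univ _ _) c.pos_injective.injOn
    (fun z _ => ⟨Nat.zero_le _, c.pos_lt_add⟩) fun z _ => ?_
  have := c.ext_lt
  have := c.le_int
  have hext : c.pos (gammaAnn p q c.ext) = 0 := by
    rw [← eqOn_gammaExt_gammaAnn c.ext_lt, c.pos_gammaExt c.ext_lt, pos_ext, if_neg (by omega)]
  have hint : c.pos (gammaAnn p q c.int) = p := by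
    rw [← eqOn_gammaInt_gammaAnn c.le_int, c.pos_gammaInt c.le_int, pos_int, if_neg (by omega)]
  rw [perm, Perm.mul_apply]
  rcases eq_or_ne z c.ext with rfl | hzext
  · rw [swap_apply_left, hint, pos_ext, if_pos] <;> omega
  rcases eq_or_ne z c.int with rfl | hzint
  · rw [swap_apply_right, hext, pos_int, if_neg]
    omega
  have hpext := c.pos_ext ▸ c.pos_injective.ne hzext
  have hpint := c.pos_int ▸ c.pos_injective.ne hzint
  have hpz := c.pos_lt_add (z := z)
  rw [swap_apply_of_ne_of_ne hzext hzint]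
  rcases lt_or_ge (z : ℕ) p with hz | hz
  · have := c.pos_lt_iff.2 hz
    rw [← eqOn_gammaExt_gammaAnn hz, c.pos_gammaExt hz, if_pos, if_pos] <;> omega
  · rw [← eqOn_gammaInt_gammaAnn hz, c.pos_gammaInt hz, if_pos, if_pos] <;> omega

theorem pos_gammaExt_pow {k : ℕ} (hk : k < p) :
    c.pos ((gammaExt p q ^ (k + 1)) c.ext) = k := by
  induction k with
  | zero => rw [zero_add, pow_one, c.pos_gammaExt c.ext_lt, pos_ext, if_neg (by omega)]
  | succ k ih =>
    have hk' := ih (by omega)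
    rw [pow_succ', Perm.mul_apply, c.pos_gammaExt (c.pos_lt_iff.1 (by omega)), hk', if_pos hk]

theorem pos_gammaInt_pow {k : ℕ} (hk : k < q) :
    c.pos ((gammaInt p q ^ (k + 1)) c.int) = p + k := by
  have := c.le_int
  induction k with
  | zero => rw [zero_add, pow_one, c.pos_gammaInt c.le_int, pos_int, if_neg (by omega), add_zero]
  | succ k ih =>
    have hk' := ih (by omega)
    have hmem : (gammaInt p q ^ (k + 1)) c.int ∈ intSet p q :=
      not_lt.1 (c.pos_lt_iff.not.1 (by omega))
    rw [pow_succ', Perm.mul_apply, c.pos_gammaInt hmem, hk', if_pos (by omega), add_assoc]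

theorem pairwise_pos_lamPerm_cycle :
    (((List.range (p - 1)).map fun k => (gammaExt p q ^ (k + 1)) c.ext) ++
      ((List.range (q - 1)).map fun k => (gammaInt p q ^ (k + 1)) c.int)).Pairwise
      (c.pos · < c.pos ·) := by
  have hext : ∀ k ∈ List.range (p - 1), c.pos ((gammaExt p q ^ (k + 1)) c.ext) = k := fun k hk =>
    c.pos_gammaExt_pow (by have := List.mem_range.1 hk; omega)
  have hint : ∀ k ∈ List.range (q - 1), c.pos ((gammaInt p q ^ (k + 1)) c.int) = p + k :=
    fun k hk => c.pos_gammaInt_pow (by have := List.mem_range.1 hk; omega)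
  simp only [List.pairwise_append, List.pairwise_map, List.forall_mem_map]
  refine ⟨List.pairwise_lt_range.imp_of_mem fun hj hk h => ?_,
    List.pairwise_lt_range.imp_of_mem fun hj hk h => ?_, fun j hj k hk => ?_⟩
  · rwa [hext _ hj, hext _ hk]
  · rw [hint _ hj, hint _ hk]
    omega
  · rw [hext _ hj, hint _ hk]
    have := List.mem_range.1 hj
    omega

theorem mem_lamPerm_cycle_iff :
    z ∈ ((List.range (p - 1)).map fun k => (gammaExt p q ^ (k + 1)) c.ext) ++
      ((List.range (q - 1)).map fun k => (gammaInt p q ^ (k + 1)) c.int) ↔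
      z ≠ c.ext ∧ z ≠ c.int := by
  have := c.ext_lt
  have := c.le_int
  have := c.pos_lt_add (z := z)
  simp only [List.mem_append, List.mem_map, List.mem_range, ← c.pos_injective.ne_iff, pos_ext,
    pos_int]
  constructor
  · rintro (⟨k, hk, rfl⟩ | ⟨k, hk, rfl⟩)
    · rw [c.pos_gammaExt_pow (by omega)]
      omega
    · rw [c.pos_gammaInt_pow (by omega)]
      omega
  · rintro ⟨hext, hint⟩
    rcases lt_or_ge (c.pos z) p with hz | hz
    · exact .inl ⟨c.pos z, by omega, c.pos_injective (c.pos_gammaExt_pow hz)⟩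
    · refine .inr ⟨c.pos z - p, by omega, c.pos_injective ?_⟩
      rw [c.pos_gammaInt_pow (by omega)]
      omega

theorem isSuccOn_lamPerm : IsSuccOn c.pos (lamPerm p q c.ext c.int) {c.ext, c.int}ᶜ := by
  have h : {z | z ≠ c.ext ∧ z ≠ c.int} = ({c.ext, c.int}ᶜ : Set (Fin (p + q))) := by
    ext
    simp
  have hsucc := isSuccOn_formPerm c.pairwise_pos_lamPerm_cycle
  simp only [mem_lamPerm_cycle_iff, h] at hsucc
  exact hsucc

variable (c' : AnnularCut p q)

/-- The points met strictly after `c'.ext` and up to `c'.int` along the boundary of the disc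
obtained by cutting along `c`. -/
def arc : Set (Fin (p + q)) := {z | c.pos z ∈ Set.Ioc (c.pos c'.ext) (c.pos c'.int)}

variable {w t : Fin (p + q)} {c c'}

theorem pos_recut_of_lt (hz : (z : ℕ) < p) :
    c.pos c'.ext < c.pos z ∧ c'.pos z + c.pos c'.ext + 1 = c.pos z ∨
      c.pos z ≤ c.pos c'.ext ∧ c'.pos z + c.pos c'.ext + 1 = c.pos z + p := by
  have := c.ext_lt
  have := c'.ext_lt
  simp only [pos, hz, c'.ext_lt, if_true]
  split_ifs <;> omega

theorem pos_recut_of_le (hz : p ≤ (z : ℕ)) :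
    c.pos c'.int < c.pos z ∧ c'.pos z + c.pos c'.int + 1 = c.pos z + p ∨
      c.pos z ≤ c.pos c'.int ∧ c'.pos z + c.pos c'.int + 1 = c.pos z + p + q := by
  have := c.le_int
  have := c'.le_int
  simp only [pos, hz.not_gt, c'.le_int.not_gt, if_false]
  split_ifs <;> omega

theorem pos_lt_pos_iff_of_mem_arc_iff (h : z ∈ c.arc c' ↔ w ∈ c.arc c') :
    c'.pos z < c'.pos w ↔ c.pos z < c.pos w := by
  have := c.pos_lt_iff (z := z)
  have := c.pos_lt_iff (z := w)
  have := c.pos_lt_iff.2 c'.ext_lt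
  have := c.pos_lt_iff.not.2 c'.le_int.not_gt
  have := c'.pos_lt_iff (z := z)
  have := c'.pos_lt_iff (z := w)
  have := c.pos_lt_add (z := z)
  have := c.pos_lt_add (z := w)
  simp only [arc, Set.mem_ofPred_eq, Set.mem_Ioc] at h
  rcases lt_or_ge (z : ℕ) p with hz | hz <;> rcases lt_or_ge (w : ℕ) p with hw | hw
  · have := pos_recut_of_lt (c := c) (c' := c') hz
    have := pos_recut_of_lt (c := c) (c' := c') hw
    omega
  · omega
  · omega
  · have := pos_recut_of_le (c := c) (c' := c') hz
    have := pos_recut_of_le (c := c) (c' := c') hw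
    omega

theorem pos_lt_pos_iff_of_mem_arc_of_notMem (hz : z ∈ c.arc c') (hw : w ∉ c.arc c') :
    c'.pos z < c'.pos w ↔ (z : ℕ) < p := by
  have := c.pos_lt_iff (z := z)
  have := c.pos_lt_iff (z := w)
  have := c.pos_lt_iff.2 c'.ext_lt
  have := c.pos_lt_iff.not.2 c'.le_int.not_gt
  have := c'.pos_lt_iff (z := z)
  have := c'.pos_lt_iff (z := w)
  have := c.pos_lt_add (z := w)
  simp only [arc, Set.mem_ofPred_eq, Set.mem_Ioc] at hz hw
  rcases lt_or_ge (z : ℕ) p with hz | hz <;> rcases lt_or_ge (w : ℕ) p with hw | hw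
  · have := pos_recut_of_lt (c := c) (c' := c') hz
    have := pos_recut_of_lt (c := c) (c' := c') hw
    omega
  · omega
  · omega
  · have := pos_recut_of_le (c := c) (c' := c') hz
    have := pos_recut_of_le (c := c) (c' := c') hw
    omega

theorem sbtw_pos_iff_of_mem_arc_iff (hzw : z ∈ c.arc c' ↔ w ∈ c.arc c')
    (hzt : z ∈ c.arc c' ↔ t ∈ c.arc c') :
    sbtw (c'.pos z) (c'.pos w) (c'.pos t) ↔ sbtw (c.pos z) (c.pos w) (c.pos t) := by
  simp only [nat_sbtw_iff, pos_lt_pos_iff_of_mem_arc_iff hzw,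
    pos_lt_pos_iff_of_mem_arc_iff (hzw.symm.trans hzt), pos_lt_pos_iff_of_mem_arc_iff hzt.symm]

theorem not_sbtw_pos_of_mem_arc_iff {a b : Fin (p + q)} (hzw : ¬ (z ∈ c.arc c' ↔ w ∈ c.arc c'))
    (hza : z ∈ c.arc c' ↔ a ∈ c.arc c') (hwb : w ∈ c.arc c' ↔ b ∈ c.arc c')
    (hzwa : sbtw (c'.pos z) (c'.pos w) (c'.pos a)) :
    ¬ sbtw (c'.pos z) (c'.pos a) (c'.pos b) := by
  rw [nat_sbtw_iff] at hzwa ⊢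
  have hlt {s t : Fin (p + q)} (hs : s ∈ c.arc c') (ht : t ∉ c.arc c') :
      c'.pos s < c'.pos t ↔ c'.pos s < p :=
    (pos_lt_pos_iff_of_mem_arc_of_notMem hs ht).trans c'.pos_lt_iff.symm
  by_cases hz : z ∈ c.arc c'
  · have hw : w ∉ c.arc c' := fun hw => hzw (iff_of_true hz hw)
    have := hlt hz hw
    have := hlt hz (hwb.not.1 hw)
    have := hlt (hza.1 hz) hw
    have := hlt (hza.1 hz) (hwb.not.1 hw)
    omega
  · have hw : w ∈ c.arc c' := by_contra fun hw => hzw (iff_of_false hz hw)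
    have := hlt hw hz
    have := hlt (hwb.1 hw) hz
    have := hlt hw (hza.not.1 hz)
    have := hlt (hwb.1 hw) (hza.not.1 hz)
    omega

end AnnularCut

section NoncrossingAlongCut

variable {τ : Perm (Fin (p + q))} {c c' : AnnularCut p q} {a b : Fin (p + q)}

theorem mapsCyc4_gammaAnn_iff (c : AnnularCut p q) {d e : Fin (p + q)}
    (hb : a ∈ extSet p q ↔ b ∈ extSet p q) (hd : a ∈ extSet p q ↔ d ∈ extSet p q)
    (he : a ∈ extSet p q ↔ e ∈ extSet p q) (hne : [a, b, d, e].Pairwise (· ≠ ·)) :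
    MapsCyc4 (gammaAnn p q) {a, b, d, e} a b d e ↔
      sbtw (c.pos a) (c.pos b) (c.pos d) ∧ sbtw (c.pos a) (c.pos d) (c.pos e) := by
  by_cases ha : a ∈ extSet p q
  · exact (c.isSuccOn_gammaExt.congr_fun eqOn_gammaExt_gammaAnn).mapsCyc4_iff ha (hb.1 ha)
      (hd.1 ha) (he.1 ha) hne
  · exact (c.isSuccOn_gammaInt.congr_fun eqOn_gammaInt_gammaAnn).mapsCyc4_iff
      (notMem_extSet_iff.1 ha) (notMem_extSet_iff.1 (hb.not.1 ha))
      (notMem_extSet_iff.1 (hd.not.1 ha)) (notMem_extSet_iff.1 (he.not.1 ha)) hne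

theorem NoncrossingAlong.annStandard (h : NoncrossingAlong c.pos τ) : AnnStandard p q τ := by
  have hpos (z : Fin (p + q)) : z ∈ extSet p q ↔ c.pos z < p := c.pos_lt_iff.symm
  refine ⟨?_, ?_⟩
  · rintro _ ⟨a, rfl⟩
    exact ⟨fun b hb => (h.isSuccOn_orbit a).induced_eq_induced c.isSuccOn_gammaExt
        Set.inter_subset_left Set.inter_subset_right hb,
      fun b hb => (h.isSuccOn_orbit a).induced_eq_induced c.isSuccOn_gammaInt
        Set.inter_subset_left Set.inter_subset_right hb⟩
  · rintro _ ⟨a, rfl⟩ ⟨b, hab, hb⟩ ⟨d, had, hd⟩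
    have hbd : τ.SameCycle b d := hab.symm.trans had
    have horbit (z : Fin (p + q)) : τ.SameCycle a z ↔ τ.SameCycle b z :=
      ⟨hab.symm.trans, hab.trans⟩
    have horbit' (z : Fin (p + q)) : τ.SameCycle a z ↔ τ.SameCycle d z :=
      ⟨had.symm.trans, had.trans⟩
    constructor
    · simp only [← notMem_extSet_iff, Set.mem_inter_iff, Set.mem_ofPred_eq, horbit]
      refine h.existsUnique_apply_notMem ?_ hb (notMem_extSet_iff.2 hd) hbd
      simp only [hpos, nat_sbtw_iff]
      omega
    · simp only [← notMem_intSet_iff, Set.mem_inter_iff, Set.mem_ofPred_eq, horbit']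
      refine h.existsUnique_apply_notMem ?_ hd (notMem_intSet_iff.2 hb) hbd.symm
      simp only [← notMem_extSet_iff, hpos, nat_sbtw_iff]
      omega

theorem NoncrossingAlong.not_AC1 (h : NoncrossingAlong c.pos τ) : ¬ AC1 p q τ := by
  rintro ⟨a, b, d, e, hne, hγ, hτ⟩
  have hab : (gammaAnn p q).SameCycle a b := hγ.1 ▸ sameCycle_induced _ (by simp)
  have hbd : (gammaAnn p q).SameCycle b d := hγ.2.1 ▸ sameCycle_induced _ (by simp)
  have hde : (gammaAnn p q).SameCycle d e := hγ.2.2.1 ▸ sameCycle_induced _ (by simp)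
  have hS (z : Fin (p + q)) : gammaAnn p q z ∈ extSet p q ↔ z ∈ extSet p q := gammaAnn_apply_lt_iff
  have hb := mem_iff_mem_of_sameCycle hS hab
  have hd := hb.trans (mem_iff_mem_of_sameCycle hS hbd)
  have he := hd.trans (mem_iff_mem_of_sameCycle hS hde)
  obtain ⟨habd, hade⟩ := (mapsCyc4_gammaAnn_iff c hb hd he hne).1 hγ
  exact h.not_mapsSwap2 (by simp) (by simp) habd hade hτ

theorem NoncrossingAlong.mem_arc_iff (h : NoncrossingAlong c.pos τ)
    (hc' : τ.SameCycle c'.ext c'.int) (ha : ¬ τ.SameCycle c'.ext a) (hab : τ.SameCycle a b) :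
    a ∈ c.arc c' ↔ b ∈ c.arc c' := by
  have hmem {a b : Fin (p + q)} (ha : ¬ τ.SameCycle c'.ext a) (hab : τ.SameCycle a b)
      (haa : a ∈ c.arc c') : b ∈ c.arc c' := by
    by_contra hbb
    have hai : c.pos a ≠ c.pos c'.int := c.pos_injective.ne (by rintro rfl; exact ha hc')
    have hbe : c.pos b ≠ c.pos c'.ext :=
      c.pos_injective.ne (by rintro rfl; exact ha hab.symm)
    simp only [AnnularCut.arc, Set.mem_ofPred_eq, Set.mem_Ioc] at haa hbb
    refine ha (h.sameCycle_of_sbtw (c := c'.int) (d := b) ?_ ?_ hc' hab) <;>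
    · rw [nat_sbtw_iff]
      omega
  exact ⟨hmem ha hab, hmem (fun hb => ha (hb.trans hab.symm)) hab.symm⟩

theorem NoncrossingAlong.not_AC2 (h : NoncrossingAlong c.pos τ) : ¬ AC2 p q τ := by
  rintro ⟨a, b, d, x, y, hne, hx, hy, hlam, hτ, hxy⟩
  obtain ⟨c', rfl, rfl⟩ : ∃ c' : AnnularCut p q, c'.ext = x ∧ c'.int = y :=
    ⟨⟨x, y, hx, hy⟩, rfl, rfl⟩
  simp only [List.pairwise_cons, List.mem_cons, forall_eq_or_imp, List.not_mem_nil] at hne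
  obtain ⟨⟨hab, had, hax, hay, -⟩, ⟨hbd, hbx, hby, -⟩, ⟨hdx, hdy, -⟩, -⟩ := hne
  have hc' : τ.SameCycle c'.ext c'.int := hxy.1 ▸ sameCycle_induced τ (by simp)
  have hτad : τ.SameCycle a d := hτ.1 ▸ sameCycle_induced τ (by simp)
  have hτdb : τ.SameCycle d b := hτ.2.1 ▸ sameCycle_induced τ (by simp)
  have hxa : ¬ τ.SameCycle c'.ext a :=
    h.not_sameCycle_of_mapsSwap hxy (by simp) (by simp) (by simp) hax hay
  have habd' : sbtw (c'.pos a) (c'.pos b) (c'.pos d) :=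
    (c'.isSuccOn_lamPerm.mapsCyc3_iff (by simp [hax, hay]) (by simp [hbx, hby])
      (by simp [hdx, hdy]) hab had hbd).1 hlam
  have habd : sbtw (c.pos a) (c.pos b) (c.pos d) :=
    (AnnularCut.sbtw_pos_iff_of_mem_arc_iff (h.mem_arc_iff hc' hxa (hτad.trans hτdb))
      (h.mem_arc_iff hc' hxa hτad)).1 habd'
  have hadb : sbtw (c.pos a) (c.pos d) (c.pos b) :=
    h.sbtw_of_induced_eq (by simp) hτ.1 (by simp) (hτad.trans hτdb) hab.symm hbd
  exact sbtw_asymm habd hadb.cyclic_left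

theorem NoncrossingAlong.not_AC3 (h : NoncrossingAlong c.pos τ) : ¬ AC3 p q τ := by
  rintro ⟨a, b, d, e, x, y, hne, hx, hy, hlam, hτ, hxy⟩
  obtain ⟨c', rfl, rfl⟩ : ∃ c' : AnnularCut p q, c'.ext = x ∧ c'.int = y :=
    ⟨⟨x, y, hx, hy⟩, rfl, rfl⟩
  have hne' : [a, b, d, e].Pairwise (· ≠ ·) := hne.sublist (by simp)
  simp only [List.pairwise_cons, List.mem_cons, forall_eq_or_imp, List.not_mem_nil] at hne
  obtain ⟨⟨-, -, -, hax, hay, -⟩, ⟨-, -, hbx, hby, -⟩, ⟨-, hdx, hdy, -⟩, ⟨hex, hey, -⟩, -⟩ := hne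
  have hc' : τ.SameCycle c'.ext c'.int := hxy.1 ▸ sameCycle_induced τ (by simp)
  have hτad : τ.SameCycle a d := hτ.1 ▸ sameCycle_induced τ (by simp)
  have hτbe : τ.SameCycle b e := hτ.2.2.1 ▸ sameCycle_induced τ (by simp)
  have hxa : ¬ τ.SameCycle c'.ext a :=
    h.not_sameCycle_of_mapsSwap hxy (by simp) (by simp) (by simp) hax hay
  have hxb : ¬ τ.SameCycle c'.ext b :=
    h.not_sameCycle_of_mapsSwap hxy (by simp) (by simp) (by simp) hbx hby
  have had := h.mem_arc_iff hc' hxa hτad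
  have hbe := h.mem_arc_iff hc' hxb hτbe
  obtain ⟨habd, hade⟩ := (c'.isSuccOn_lamPerm.mapsCyc4_iff (by simp [hax, hay])
    (by simp [hbx, hby]) (by simp [hdx, hdy]) (by simp [hex, hey]) hne').1 hlam
  by_cases hab : a ∈ c.arc c' ↔ b ∈ c.arc c'
  · exact h.not_mapsSwap2 (by simp) (by simp)
      ((AnnularCut.sbtw_pos_iff_of_mem_arc_iff hab had).1 habd)
      ((AnnularCut.sbtw_pos_iff_of_mem_arc_iff had (hab.trans hbe)).1 hade) hτ
  · exact AnnularCut.not_sbtw_pos_of_mem_arc_iff hab had hbe habd hade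

theorem NoncrossingAlong.annNC (h : NoncrossingAlong c.pos τ) : AnnNC p q τ :=
  ⟨h.annStandard, h.not_AC1, h.not_AC2, h.not_AC3⟩

end NoncrossingAlongCut

section OfAnnNC

variable {τ : Perm (Fin (p + q))} {a b d e z : Fin (p + q)}

theorem AnnStandard.sbtw_pos_apply (h : AnnStandard p q τ) (c : AnnularCut p q)
    (hτa : a ∈ extSet p q ↔ τ a ∈ extSet p q) (haz : τ.SameCycle a z)
    (hz : a ∈ extSet p q ↔ z ∈ extSet p q) (hza : z ≠ a) (hzτ : z ≠ τ a) :
    sbtw (c.pos a) (c.pos (τ a)) (c.pos z) := by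
  have haa := Perm.SameCycle.refl τ a
  obtain ⟨hext, hint⟩ := h.1 _ ⟨a, rfl⟩
  by_cases ha : a ∈ extSet p q
  · exact c.isSuccOn_gammaExt.sbtw_apply_of_induced_eq Set.inter_subset_right ⟨haa, ha⟩
      ⟨haa.apply_right, hτa.1 ha⟩ ⟨haz, hz.1 ha⟩ hza hzτ (hext a ⟨haa, ha⟩)
  · rw [hz, notMem_extSet_iff] at ha
    rw [← not_iff_not, notMem_extSet_iff, notMem_extSet_iff] at hτa hz
    have ha := hz.2 ha
    exact c.isSuccOn_gammaInt.sbtw_apply_of_induced_eq Set.inter_subset_right ⟨haa, ha⟩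
      ⟨haa.apply_right, hτa.1 ha⟩ ⟨haz, hz.1 ha⟩ hza hzτ (hint a ⟨haa, ha⟩)

theorem sameCycle_of_not_AC1 (h : ¬ AC1 p q τ) (c : AnnularCut p q)
    (hb : a ∈ extSet p q ↔ b ∈ extSet p q) (hd : a ∈ extSet p q ↔ d ∈ extSet p q)
    (he : a ∈ extSet p q ↔ e ∈ extSet p q) (habd : sbtw (c.pos a) (c.pos b) (c.pos d))
    (hade : sbtw (c.pos a) (c.pos d) (c.pos e)) (had : τ.SameCycle a d)
    (hbe : τ.SameCycle b e) : τ.SameCycle a b := by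
  by_contra hab
  have hne := pairwise_ne_of_sbtw habd hade
  have hγ := (mapsCyc4_gammaAnn_iff c hb hd he hne).2 ⟨habd, hade⟩
  have hae : ¬ τ.SameCycle a e := fun hae => hab (hae.trans hbe.symm)
  have hbd : ¬ τ.SameCycle b d := fun hbd => hab (had.trans hbd.symm)
  have hba : ¬ τ.SameCycle b a := fun hba => hab hba.symm
  have hne' := hne
  simp only [List.pairwise_cons, List.mem_cons, forall_eq_or_imp, List.not_mem_nil] at hne'
  obtain ⟨⟨-, had', -⟩, ⟨-, hbe', -⟩, -⟩ := hne'
  have hswap : MapsSwap τ {a, b, d, e} a d :=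
    mapsSwap_of_sameCycle (by simp) (by simp) had' had (by simp [hab, hae])
  have hswap' : MapsSwap τ {a, b, d, e} b e :=
    mapsSwap_of_sameCycle (by simp) (by simp) hbe' hbe (by simp [hba, hbd])
  exact h ⟨a, b, d, e, hne, hγ, hswap.1, hswap.2, hswap'.1, hswap'.2⟩

theorem notMem_of_not_sameCycle {c : AnnularCut p q} (hc : τ.SameCycle c.ext c.int)
    (ha : ¬ τ.SameCycle c.ext a) ⦃z : Fin (p + q)⦄ (haz : τ.SameCycle a z) :
    z ∉ ({c.ext, c.int} : Set (Fin (p + q))) := by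
  rintro (rfl | rfl)
  · exact ha haz.symm
  · exact ha (hc.trans haz.symm)

theorem sbtw_pos_apply_of_not_AC2 (h : ¬ AC2 p q τ) {c : AnnularCut p q}
    (hc : τ.SameCycle c.ext c.int) (ha : ¬ τ.SameCycle c.ext a) (haz : τ.SameCycle a z)
    (hza : z ≠ a) (hzτ : z ≠ τ a) : sbtw (c.pos a) (c.pos (τ a)) (c.pos z) := by
  by_contra hsbtw
  have haa := Perm.SameCycle.refl τ a
  have haτ : a ≠ τ a := fun haτ => hza (haz.eq_of_left haτ.symm).symm
  have hazτ : sbtw (c.pos a) (c.pos z) (c.pos (τ a)) := by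
    have := c.pos_injective.ne haτ
    have := c.pos_injective.ne hza
    have := c.pos_injective.ne hzτ
    rw [nat_sbtw_iff] at hsbtw ⊢
    omega
  have hcut := notMem_of_not_sameCycle hc ha
  have hlam := (c.isSuccOn_lamPerm.mapsCyc3_iff (hcut haa) (hcut haz) (hcut haa.apply_right)
    hza.symm haτ hzτ).2 hazτ
  simp only [Set.mem_insert_iff, Set.mem_singleton_iff, not_or] at hcut
  obtain ⟨hax, hay⟩ := hcut haa
  obtain ⟨hzx, hzy⟩ := hcut haz
  obtain ⟨hτx, hτy⟩ := hcut haa.apply_right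
  have hxa : ¬ τ.SameCycle a c.ext := fun hxa => ha hxa.symm
  have hya : ¬ τ.SameCycle a c.int := fun hya => ha (hc.trans hya.symm)
  have hxz : ¬ τ.SameCycle c.ext z := fun hxz => ha (hxz.trans haz.symm)
  refine h ⟨a, z, τ a, c.ext, c.int, ?_, c.ext_lt, c.le_int, hlam, ?_, ?_⟩
  · simp [hza.symm, haτ, hax, hay, hzτ, hzx, hzy, hτx, hτy, c.ext_ne_int]
  · exact mapsCyc3_of_induced_eq (by simp) (by simp) haτ hza.symm hzτ.symm haz
      (by simp [hxa, hya]) (induced_eq_apply (by simp) (by simp))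
  · exact mapsSwap_of_sameCycle (by simp) (by simp) c.ext_ne_int hc (by simp [ha, hxz])

theorem sameCycle_of_not_AC3 (h : ¬ AC3 p q τ) {c : AnnularCut p q}
    (hc : τ.SameCycle c.ext c.int) (ha : ¬ τ.SameCycle c.ext a) (hb : ¬ τ.SameCycle c.ext b)
    (habd : sbtw (c.pos a) (c.pos b) (c.pos d)) (hade : sbtw (c.pos a) (c.pos d) (c.pos e))
    (had : τ.SameCycle a d) (hbe : τ.SameCycle b e) : τ.SameCycle a b := by
  by_contra hab
  have hne := pairwise_ne_of_sbtw habd hade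
  have hcut := notMem_of_not_sameCycle hc ha
  have hcut' := notMem_of_not_sameCycle hc hb
  have hlam := (c.isSuccOn_lamPerm.mapsCyc4_iff (hcut (.refl τ a)) (hcut' (.refl τ b)) (hcut had)
    (hcut' hbe) hne).2 ⟨habd, hade⟩
  simp only [Set.mem_insert_iff, Set.mem_singleton_iff, not_or] at hcut hcut'
  obtain ⟨hax, hay⟩ := hcut (.refl τ a)
  obtain ⟨hbx, hby⟩ := hcut' (.refl τ b)
  obtain ⟨hdx, hdy⟩ := hcut had
  obtain ⟨hex, hey⟩ := hcut' hbe
  have hd : ¬ τ.SameCycle c.ext d := fun hd => ha (hd.trans had.symm)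
  have he : ¬ τ.SameCycle c.ext e := fun he => hb (he.trans hbe.symm)
  have hxa : ¬ τ.SameCycle a c.ext := fun hxa => ha hxa.symm
  have hya : ¬ τ.SameCycle a c.int := fun hya => ha (hc.trans hya.symm)
  have hxb : ¬ τ.SameCycle b c.ext := fun hxb => hb hxb.symm
  have hyb : ¬ τ.SameCycle b c.int := fun hyb => hb (hc.trans hyb.symm)
  have hae : ¬ τ.SameCycle a e := fun hae => hab (hae.trans hbe.symm)
  have hbd : ¬ τ.SameCycle b d := fun hbd => hab (had.trans hbd.symm)
  have hba : ¬ τ.SameCycle b a := fun hba => hab hba.symm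
  simp only [List.pairwise_cons, List.mem_cons, forall_eq_or_imp, List.not_mem_nil] at hne
  obtain ⟨⟨hab', had', hae', -⟩, ⟨hbd', hbe', -⟩, ⟨hde', -⟩, -⟩ := hne
  have hswap : MapsSwap τ {a, b, d, e, c.ext, c.int} a d :=
    mapsSwap_of_sameCycle (by simp) (by simp) had' had (by simp [hab, hae, hxa, hya])
  have hswap' : MapsSwap τ {a, b, d, e, c.ext, c.int} b e :=
    mapsSwap_of_sameCycle (by simp) (by simp) hbe' hbe (by simp [hba, hbd, hxb, hyb])
  have hcutswap : MapsSwap τ {a, b, d, e, c.ext, c.int} c.ext c.int :=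
    mapsSwap_of_sameCycle (by simp) (by simp) c.ext_ne_int hc (by simp [ha, hb, hd, he])
  refine h ⟨a, b, d, e, c.ext, c.int, ?_, c.ext_lt, c.le_int, hlam,
    ⟨hswap.1, hswap.2, hswap'⟩, hcutswap⟩
  simp [hab', had', hae', hax, hay, hbd', hbe', hbx, hby, hde', hdx, hdy, hex, hey, c.ext_ne_int]

variable {c c' : AnnularCut p q}

theorem AnnNC.noncrossingAlong_of_apply_mem_extSet_iff (h : AnnNC p q τ) (c : AnnularCut p q)
    (hτ : ∀ z, τ z ∈ extSet p q ↔ z ∈ extSet p q) : NoncrossingAlong c.pos τ where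
  sbtw_apply a z haz := h.1.sbtw_pos_apply c (hτ a).symm haz (mem_iff_mem_of_sameCycle hτ haz)
  sameCycle_of_lt a b d e hab hbd hde had hbe := by
    have hd := mem_iff_mem_of_sameCycle hτ had
    have he := mem_iff_mem_of_sameCycle hτ hbe
    have hpos (z : Fin (p + q)) : z ∈ extSet p q ↔ c.pos z < p := c.pos_lt_iff.symm
    refine sameCycle_of_not_AC1 h.2.1 c ?_ hd ?_ (.inl ⟨hab, hbd⟩) (.inl ⟨hab.trans hbd, hde⟩)
      had hbe <;>
    · simp only [hpos] at hd he ⊢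
      omega

theorem apply_ext_mem_intSet (hc : gammaAnn p q c.int = τ c.ext) : τ c.ext ∈ intSet p q := by
  rw [← hc, ← notMem_extSet_iff]
  exact gammaAnn_apply_lt_iff.not.2 c.le_int.not_gt

theorem pos_apply_ext (hc : gammaAnn p q c.int = τ c.ext) : c.pos (τ c.ext) = p := by
  have := c.le_int
  rw [← hc, ← eqOn_gammaInt_gammaAnn c.le_int, c.pos_gammaInt c.le_int, c.pos_int,
    if_neg (by omega)]

theorem notMem_arc_of_not_sameCycle (hc : gammaAnn p q c.int = τ c.ext) (hext : c'.ext = c.ext)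
    (hint : c'.int = τ c.ext) (hz : ¬ τ.SameCycle c.ext z) : z ∉ c.arc c' := by
  have hne : c.pos z ≠ c.pos (τ c.ext) :=
    c.pos_injective.ne (by rintro rfl; exact hz (Perm.SameCycle.refl τ _).apply_right)
  have := c.ext_lt
  simp only [AnnularCut.arc, hext, hint, Set.mem_ofPred_eq, Set.mem_Ioc, c.pos_ext,
    pos_apply_ext hc] at hne ⊢
  omega

theorem AnnStandard.pos_lt_pos_apply (h : AnnStandard p q τ) (hc : gammaAnn p q c.int = τ c.ext)
    (ha : τ.SameCycle c.ext a) (hτa : a ∈ extSet p q ∨ τ a ∈ intSet p q) :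
    c.pos a < c.pos (τ a) := by
  have hpos (z : Fin (p + q)) : z ∈ extSet p q ↔ c.pos z < p := c.pos_lt_iff.symm
  have hpext := c.pos_ext
  have hpτ := pos_apply_ext hc
  rw [← notMem_extSet_iff] at hτa
  by_cases hext : a ∈ extSet p q
  · by_cases hτext : τ a ∈ extSet p q
    · have hτaint : a ≠ c.ext := by
        rintro rfl
        exact notMem_extSet_iff.2 (apply_ext_mem_intSet hc) hτext
      have hne := c.pos_injective.ne hτaint
      have hsbtw := h.sbtw_pos_apply c (iff_of_true hext hτext) ha.symm
        (iff_of_true hext c.ext_lt) hτaint.symm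
      rw [nat_sbtw_iff, ← c.pos_injective.ne_iff] at hsbtw
      rw [hpos] at hext hτext
      omega
    · rw [hpos] at hext hτext
      omega
  · have hτext := hτa.resolve_left hext
    have hv := notMem_extSet_iff.2 (apply_ext_mem_intSet hc)
    have haext : a ≠ c.ext := by rintro rfl; exact hext c.ext_lt
    have hne := c.pos_injective.ne (τ.injective.ne haext)
    have hfix : τ a ≠ a := fun hfix => haext (ha.symm.eq_of_left hfix)
    have hne' := c.pos_injective.ne hfix
    have hsbtw := h.sbtw_pos_apply c (iff_of_false hext hτext) ha.symm.apply_right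
      (iff_of_false hext hv)
    rw [nat_sbtw_iff, ← c.pos_injective.ne_iff, ← c.pos_injective.ne_iff] at hsbtw
    rw [hpos] at hext hτext
    omega

theorem AnnStandard.sbtw_pos_apply_of_sameCycle_ext (h : AnnStandard p q τ)
    (hc : gammaAnn p q c.int = τ c.ext) (ha : τ.SameCycle c.ext a) (haz : τ.SameCycle a z)
    (hza : z ≠ a) (hzτ : z ≠ τ a) : sbtw (c.pos a) (c.pos (τ a)) (c.pos z) := by
  have hpos (z : Fin (p + q)) : z ∈ extSet p q ↔ c.pos z < p := c.pos_lt_iff.symm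
  have hτc := apply_ext_mem_intSet hc
  have hcc := Perm.SameCycle.refl τ c.ext
  obtain ⟨hext, hint⟩ := h.2 _ ⟨c.ext, rfl⟩ ⟨c.ext, hcc, c.ext_lt⟩ ⟨τ c.ext, hcc.apply_right, hτc⟩
  have hpza := c.pos_injective.ne hza
  have hpzτ := c.pos_injective.ne hzτ
  by_cases hback : a ∈ extSet p q ∨ τ a ∈ intSet p q
  · have hlt := h.pos_lt_pos_apply hc ha hback
    by_cases hsame : (a ∈ extSet p q ↔ τ a ∈ extSet p q) ∧ (a ∈ extSet p q ↔ z ∈ extSet p q)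
    · exact h.sbtw_pos_apply c hsame.1 haz hsame.2 hza hzτ
    by_cases hac : a = c.ext
    · subst hac
      have := c.pos_ext
      have := pos_apply_ext hc
      rw [nat_sbtw_iff]
      omega
    · have hτa (haext : a ∈ extSet p q) : τ a ∈ extSet p q :=
        notMem_intSet_iff.1 fun hτa =>
          hac (hext.unique ⟨⟨ha, haext⟩, hτa⟩ ⟨⟨hcc, c.ext_lt⟩, hτc⟩)
      rw [← notMem_extSet_iff] at hback
      simp only [hpos] at hsame hτa hback
      rw [nat_sbtw_iff]
      omega
  · rw [not_or, notMem_extSet_iff, notMem_intSet_iff] at hback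
    have hlt (b : Fin (p + q)) (hb : τ.SameCycle a b) (hba : b ≠ a) : c.pos b < c.pos (τ b) := by
      refine h.pos_lt_pos_apply hc (ha.trans hb) ?_
      by_contra hback'
      rw [not_or, notMem_extSet_iff, notMem_intSet_iff] at hback'
      exact hba (hint.unique ⟨⟨ha.trans hb, hback'.1⟩, hback'.2⟩ ⟨⟨ha, hback.1⟩, hback.2⟩)
    have := Set.mem_Icc.1 (pos_mem_Icc_of_forall_lt_apply hlt haz)
    rw [nat_sbtw_iff]
    omega

-- (AC-2) controls the cut `c₁` to `τ c.ext` itself, which differs from `c` only in the position of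
-- `τ c.ext`.
theorem AnnNC.sbtw_pos_apply (h : AnnNC p q τ) (hc : gammaAnn p q c.int = τ c.ext)
    (haz : τ.SameCycle a z) (hza : z ≠ a) (hzτ : z ≠ τ a) :
    sbtw (c.pos a) (c.pos (τ a)) (c.pos z) := by
  by_cases ha : τ.SameCycle c.ext a
  · exact h.1.sbtw_pos_apply_of_sameCycle_ext hc ha haz hza hzτ
  let c₁ : AnnularCut p q := ⟨c.ext, τ c.ext, c.ext_lt, apply_ext_mem_intSet hc⟩
  have harc {w : Fin (p + q)} (haw : τ.SameCycle a w) : w ∉ c.arc c₁ :=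
    notMem_arc_of_not_sameCycle hc rfl rfl fun hw => ha (hw.trans haw.symm)
  have haa := Perm.SameCycle.refl τ a
  exact (AnnularCut.sbtw_pos_iff_of_mem_arc_iff (iff_of_false (harc haa) (harc haa.apply_right))
    (iff_of_false (harc haa) (harc haz))).1 (sbtw_pos_apply_of_not_AC2 h.2.2.1 (c := c₁)
      (Perm.SameCycle.refl τ c.ext).apply_right ha haz hza hzτ)

-- The orbit of `b` has an edge `a → τ a` from the outer to the inner circle; cutting along it, a
-- point `e` outside `[b, d]` would make the orbit of `c.ext` violate (AC-2).
theorem AnnNC.pos_mem_Icc_of_mem_extSet_of_mem_intSet (h : AnnNC p q τ)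
    (hc : gammaAnn p q c.int = τ c.ext) (hb : ¬ τ.SameCycle c.ext b) (hbd : τ.SameCycle b d)
    (hbext : b ∈ extSet p q) (hdint : d ∈ intSet p q) (he : τ.SameCycle c.ext e) :
    c.pos e ∈ Set.Icc (c.pos b) (c.pos d) := by
  by_contra hout
  obtain ⟨a, hba, ha, hτa⟩ :=
    exists_sameCycle_apply_notMem hbext (notMem_extSet_iff.2 hdint) hbd
  obtain ⟨c', rfl, hc'⟩ : ∃ c' : AnnularCut p q, c'.ext = a ∧ c'.int = τ a :=
    ⟨⟨a, τ a, ha, notMem_extSet_iff.1 hτa⟩, rfl, rfl⟩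
  have hpext := c.pos_ext
  have hpτ := pos_apply_ext hc
  have hne : c.pos c'.ext ≠ c.pos c.ext :=
    c.pos_injective.ne fun heq => hb (heq ▸ hba.symm)
  have hbc' := h.sbtw_pos_apply hc hba.symm
  have hdc' := h.sbtw_pos_apply hc (hba.symm.trans hbd)
  have hpos (z : Fin (p + q)) : z ∈ extSet p q ↔ c.pos z < p := c.pos_lt_iff.symm
  rw [← notMem_extSet_iff, hpos] at hdint
  rw [hpos] at hbext ha hτa
  rw [nat_sbtw_iff, ← c.pos_injective.ne_iff, ← c.pos_injective.ne_iff] at hbc' hdc'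
  rw [Set.mem_Icc] at hout
  have harc (z : Fin (p + q)) :
      z ∈ c.arc c' ↔ c.pos c'.ext < c.pos z ∧ c.pos z ≤ c.pos (τ c'.ext) := hc' ▸ Iff.rfl
  have hext : c.ext ∈ c.arc c' := (harc _).2 (by omega)
  have hint : τ c.ext ∈ c.arc c' := (harc _).2 (by omega)
  have hearc : e ∉ c.arc c' := (harc e).not.2 (by omega)
  have hsbtw := sbtw_pos_apply_of_not_AC2 h.2.2.1 (a := c.ext) (z := e)
    (hc' ▸ (Perm.SameCycle.refl τ c'.ext).apply_right) (fun hc'c => hb (hba.trans hc'c).symm) he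
    (by rintro rfl; exact hearc hext) (by rintro rfl; exact hearc hint)
  have hlt := (AnnularCut.pos_lt_pos_iff_of_mem_arc_of_notMem hext hearc).2 c.ext_lt
  have hle := (AnnularCut.pos_lt_pos_iff_of_mem_arc_of_notMem hint hearc).not.2
    (apply_ext_mem_intSet hc).not_gt
  have := c'.pos_lt_iff.2 c.ext_lt
  have := c'.pos_lt_iff.not.2 (apply_ext_mem_intSet hc).not_gt
  rw [nat_sbtw_iff] at hsbtw
  omega

theorem AnnNC.pos_mem_Icc (h : AnnNC p q τ) (hc : gammaAnn p q c.int = τ c.ext)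
    (hb : ¬ τ.SameCycle c.ext b) (hbd : τ.SameCycle b d) (ha : τ.SameCycle c.ext a)
    (hba : c.pos b < c.pos a) (had : c.pos a < c.pos d) (he : τ.SameCycle c.ext e) :
    c.pos e ∈ Set.Icc (c.pos b) (c.pos d) := by
  have hpos (z : Fin (p + q)) : z ∈ extSet p q ↔ c.pos z < p := c.pos_lt_iff.symm
  have hcc := Perm.SameCycle.refl τ c.ext
  have hpext := c.pos_ext
  have hpτ := pos_apply_ext hc
  have hbne : c.pos b ≠ c.pos (τ c.ext) :=
    c.pos_injective.ne (by rintro rfl; exact hb hcc.apply_right)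
  have hdne : c.pos d ≠ c.pos c.ext := c.pos_injective.ne (by rintro rfl; exact hb hbd.symm)
  have hτext := notMem_extSet_iff.2 (apply_ext_mem_intSet hc)
  by_cases hbext : b ∈ extSet p q
  · by_cases hdint : d ∈ intSet p q
    · exact h.pos_mem_Icc_of_mem_extSet_of_mem_intSet hc hb hbd hbext hdint he
    have hdext := notMem_intSet_iff.1 hdint
    have hdpos := (hpos d).1 hdext
    have haext : a ∈ extSet p q := (hpos a).2 (had.trans hdpos)
    have hba' : τ.SameCycle b a :=
      sameCycle_of_not_AC1 h.2.1 c (iff_of_true hbext haext) (iff_of_true hbext hdext)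
        (iff_of_true hbext c.ext_lt) (.inl ⟨hba, had⟩) (.inl ⟨hba.trans had, by omega⟩) hbd ha.symm
    exact absurd (ha.trans hba'.symm) hb
  · have hbpos := (hpos b).not.1 hbext
    have haext : a ∉ extSet p q := (hpos a).not.2 (by omega)
    have hdext : d ∉ extSet p q := (hpos d).not.2 (by omega)
    have hτb : τ.SameCycle (τ c.ext) b :=
      sameCycle_of_not_AC1 h.2.1 c (iff_of_false hτext hbext) (iff_of_false hτext haext)
        (iff_of_false hτext hdext) (.inl ⟨by omega, hba⟩) (.inl ⟨by omega, had⟩)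
        (hcc.apply_right.symm.trans ha) hbd
    exact absurd (hcc.apply_right.trans hτb) hb

theorem AnnNC.sameCycle_of_pos_lt (h : AnnNC p q τ) (hc : gammaAnn p q c.int = τ c.ext)
    (hab : c.pos a < c.pos b) (hbd : c.pos b < c.pos d) (hde : c.pos d < c.pos e)
    (had : τ.SameCycle a d) (hbe : τ.SameCycle b e) : τ.SameCycle a b := by
  by_cases ha : τ.SameCycle c.ext a <;> by_cases hb : τ.SameCycle c.ext b
  · exact ha.symm.trans hb
  · exact absurd (h.pos_mem_Icc hc hb hbe (ha.trans had) hbd hde ha).1 hab.not_ge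
  · exact absurd (h.pos_mem_Icc hc ha had hb hab hbd (hb.trans hbe)).2 hde.not_ge
  · let c₁ : AnnularCut p q := ⟨c.ext, τ c.ext, c.ext_lt, apply_ext_mem_intSet hc⟩
    have harc {z : Fin (p + q)} (hz : ¬ τ.SameCycle c.ext z) : z ∉ c.arc c₁ :=
      notMem_arc_of_not_sameCycle hc rfl rfl hz
    have hd : ¬ τ.SameCycle c.ext d := fun hd => ha (hd.trans had.symm)
    have he : ¬ τ.SameCycle c.ext e := fun he => hb (he.trans hbe.symm)
    refine sameCycle_of_not_AC3 h.2.2.2 (c := c₁) (Perm.SameCycle.refl τ c.ext).apply_right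
      ha hb ?_ ?_ had hbe
    · exact (AnnularCut.sbtw_pos_iff_of_mem_arc_iff (iff_of_false (harc ha) (harc hb))
        (iff_of_false (harc ha) (harc hd))).2 (.inl ⟨hab, hbd⟩)
    · exact (AnnularCut.sbtw_pos_iff_of_mem_arc_iff (iff_of_false (harc ha) (harc hd))
        (iff_of_false (harc ha) (harc he))).2 (.inl ⟨hab.trans hbd, hde⟩)

theorem AnnNC.noncrossingAlong_of_gammaAnn_int_eq (h : AnnNC p q τ)
    (hc : gammaAnn p q c.int = τ c.ext) : NoncrossingAlong c.pos τ where
  sbtw_apply _ _ := h.sbtw_pos_apply hc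
  sameCycle_of_lt _ _ _ _ := h.sameCycle_of_pos_lt hc

theorem AnnNC.exists_noncrossingAlong (hp : 0 < p) (hq : 0 < q) (h : AnnNC p q τ) :
    ∃ c : AnnularCut p q, NoncrossingAlong c.pos τ := by
  by_cases hconn : ∃ u ∈ extSet p q, τ u ∉ extSet p q
  · obtain ⟨u, hu, hτu⟩ := hconn
    obtain ⟨v, hv⟩ := (gammaAnn p q).surjective (τ u)
    have hvint : v ∈ intSet p q :=
      notMem_extSet_iff.1 fun hvext => hτu (hv ▸ gammaAnn_apply_lt_iff.2 hvext)
    exact ⟨⟨u, v, hu, hvint⟩, h.noncrossingAlong_of_gammaAnn_int_eq hv⟩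
  · push Not at hconn
    let c : AnnularCut p q := ⟨⟨0, by omega⟩, ⟨p, by omega⟩, hp, le_rfl⟩
    refine ⟨c, h.noncrossingAlong_of_apply_mem_extSet_iff c fun z => ⟨fun hz => ?_, hconn z⟩⟩
    by_contra hz'
    obtain ⟨u, -, hu, hτu⟩ := exists_sameCycle_apply_notMem hz hz'
      (Perm.SameCycle.refl τ z).apply_left
    exact hτu (hconn u hu)

theorem annNC_iff_exists_isGeodesic_perm (hp : 0 < p) (hq : 0 < q) :
    AnnNC p q τ ↔ ∃ c : AnnularCut p q, IsGeodesic τ c.perm := by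
  simp only [isGeodesic_iff_noncrossingAlong (AnnularCut.isSuccOn_perm _)
    (AnnularCut.pos_injective _)]
  exact ⟨fun h => h.exists_noncrossingAlong hp hq, fun ⟨_, h⟩ => h.annNC⟩

end OfAnnNC

end Annulus

/-- Corollary 6.6: if `τ ∈ S_ann-nc(p,q)`, then `τ⁻¹γ ∈ S_ann-nc(p,q)` (so the annular
Kreweras complementation `K(τ) = τ⁻¹γ` maps `S_ann-nc(p,q)` to itself). -/
theorem stmt_19 (p q : ℕ) (hp : 0 < p) (hq : 0 < q)
    (τ : Equiv.Perm (Fin (p + q))) (h : AnnNC p q τ) :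
    AnnNC p q (τ⁻¹ * gammaAnn p q) := by
  obtain ⟨c, hc⟩ := (annNC_iff_exists_isGeodesic_perm hp hq).1 h
  let ext : Finset (Fin (p + q)) := {z | (z : ℕ) < p}
  have hγ (z : Fin (p + q)) : gammaAnn p q z ∈ ext ↔ z ∈ ext := by
    simp [ext, gammaAnn_apply_lt_iff]
  obtain ⟨u, hu, v, hv, huv⟩ :=
    IsGeodesic.exists_complement hγ (by simpa [ext] using c.ext_lt) (by simpa [ext] using c.le_int)
      hc
  exact (annNC_iff_exists_isGeodesic_perm hp hq).2
    ⟨⟨u, v, by simpa [ext] using hu, by simpa [ext] using hv⟩, huv⟩
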